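/- arXiv:2505.08131 — 3 statements merged into one kernel-verified Lean document; each statement's English description precedes it below -/
import Mathlib

section
/- Let m ≥ 4 be an even integer and let G_m be the graph with vertex set {v_{i,j} : 1 ≤ i ≤ m, 1 ≤ j ≤ 6} and the following edges: for each i, the 5-cycle v_{i,1}v_{i,2}, v_{i,2}v_{i,3}, v_{i,3}v_{i,4}, v_{i,4}v_{i,5}, v_{i,5}v_{i,1}; for each i, the edges v_{i,6}v_{i,j} for j ∈ {1,2,3,4}; for each even i, the edges v_{i,1}v_{i+1,1}, v_{i,2}v_{i+1,5}, v_{i,5}v_{i+1,2}; and for each odd i, the edges v_{i,4}v_{i+1,4}, v_{i,3}v_{i+1,5}, v_{i,5}v_{i+1,3}, where the first index is taken modulo m. Then G_m is 4-regular and G_m is 3/2-tough, i.e., every vertex set S whose removal leaves at least 2 connected components satisfies 2|S| ≥ 3·ω(G_m − S). -/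
open SimpleGraph

/-- `numComp G S` is ω(G − S): the number of connected components of the graph
obtained from `G` by deleting the vertex set `S`. -/
noncomputable def numComp {V : Type*} (G : SimpleGraph V) (S : Set V) : ℕ :=
  Nat.card (G.induce Sᶜ).ConnectedComponent

/-- The degree of a vertex, as the cardinality of its neighbor set. -/
noncomputable def ndeg {V : Type*} (G : SimpleGraph V) (v : V) : ℕ :=
  (G.neighborSet v).ncard

/-- Base (asymmetric) edge relation of the graph `G_m` from the paper.
Vertices are pairs `(i, j)` with `i : ZMod m` (paper index `i` taken mod `m`) and
`j : Fin 6` (paper index `j` shifted to `0,…,5`).  For each block `i` we have the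
5-cycle `j = 0,1,2,3,4` and the hub `j = 5` joined to `j = 0,1,2,3`; for even `i`
(paper-even, since `m` is even) the cross edges `(i,0)(i+1,0)`, `(i,1)(i+1,4)`,
`(i,4)(i+1,1)`; for odd `i` the cross edges `(i,3)(i+1,3)`, `(i,2)(i+1,4)`,
`(i,4)(i+1,2)`. -/
def gmRel (m : ℕ) (x y : ZMod m × Fin 6) : Prop :=
  (x.1 = y.1 ∧
    ((x.2 = 0 ∧ y.2 = 1) ∨ (x.2 = 1 ∧ y.2 = 2) ∨ (x.2 = 2 ∧ y.2 = 3) ∨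
     (x.2 = 3 ∧ y.2 = 4) ∨ (x.2 = 4 ∧ y.2 = 0) ∨
     (x.2 = 5 ∧ (y.2 = 0 ∨ y.2 = 1 ∨ y.2 = 2 ∨ y.2 = 3)))) ∨
  (y.1 = x.1 + 1 ∧ x.1.val % 2 = 0 ∧
    ((x.2 = 0 ∧ y.2 = 0) ∨ (x.2 = 1 ∧ y.2 = 4) ∨ (x.2 = 4 ∧ y.2 = 1))) ∨
  (y.1 = x.1 + 1 ∧ x.1.val % 2 = 1 ∧
    ((x.2 = 3 ∧ y.2 = 3) ∨ (x.2 = 2 ∧ y.2 = 4) ∨ (x.2 = 4 ∧ y.2 = 2)))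

/-- The graph `G_m`. -/
def Gm (m : ℕ) : SimpleGraph (ZMod m × Fin 6) := SimpleGraph.fromRel (gmRel m)

/-!
Reflecting every odd block turns `Gm m` into a necklace: a cyclic sequence of equal cells, each
joined to the next one in the same way. No three vertices of a cell are independent, so at most two
components of the necklace minus `S` meet a given cell.

If every component misses some cell, charge each one to a cell that it meets and whose predecessor
it misses. A cell is paid two tokens per vertex of `S` in it and may pass some on to the next cell,
depending only on how many vertices there are adjacent to its surviving vertices; this suffices for
three tokens per component.

If a component `C` meets every cell, any other component shares its cells with `C` alone, and each
shared cell contains at least two vertices of `S`. This pays for all components but one; a single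
shared cell with at least three vertices of `S`, or one with exactly two together with its two
neighbours, has three tokens left over for the last one.
-/

theorem numComp_preimage_iso {V W : Type*} {G : SimpleGraph V} {H : SimpleGraph W} (φ : G ≃g H)
    (T : Set W) : numComp G (φ ⁻¹' T) = numComp H T :=
  Nat.card_congr (Iso.connectedComponentEquiv
    { toEquiv := φ.toEquiv.subtypeEquiv fun _ => Iff.rfl
      map_rel_iff' := φ.map_rel_iff })

theorem ndeg_apply_iso {V W : Type*} {G : SimpleGraph V} {H : SimpleGraph W} (φ : G ≃g H)
    (v : V) : ndeg H (φ v) = ndeg G v :=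
  (Nat.card_congr (φ.mapNeighborSet v)).symm

theorem exists_not_and_add_one {m : ℕ} [NeZero m] {p : ZMod m → Prop} {i k : ZMod m}
    (hi : ¬ p i) (hk : p k) : ∃ l, ¬ p l ∧ p (l + 1) := by
  by_contra! hstep
  have hall (n : ℕ) : ¬ p (i + n) := by
    induction n with
    | zero => simpa using hi
    | succ n ih => simpa [add_assoc] using hstep _ ih
  exact hall (k - i).val (by simpa using hk)

theorem even_val_add_one_iff {m : ℕ} [NeZero m] (hm : Even m) (i : ZMod m) :
    Even (i + 1).val ↔ ¬ Even i.val := by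
  rw [ZMod.val_add, ZMod.val_one_eq_one_mod, Nat.add_mod_mod, Nat.even_iff,
    Nat.mod_mod_of_dvd _ hm.two_dvd, ← Nat.even_iff, Nat.even_add_one]

theorem sub_one_ne_add_one {m : ℕ} (hm : 3 ≤ m) (i : ZMod m) : i - 1 ≠ i + 1 := by
  have : Fact (2 < m) := ⟨hm⟩
  rw [sub_eq_add_neg]
  exact fun h => ZMod.neg_one_ne_one (add_left_cancel h)

namespace Gm

open Finset

/-! ### The cell -/

/-- The edges of a cell, oriented as in `gmRel`. -/
def cellEdges : Finset (Fin 6 × Fin 6) :=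
  {(0, 1), (1, 2), (2, 3), (3, 4), (4, 0), (5, 0), (5, 1), (5, 2), (5, 3)}

/-- The subgraph of `Gm m` induced by a block `{i} × Fin 6`. -/
def cell : SimpleGraph (Fin 6) := fromRel fun a b => (a, b) ∈ cellEdges

instance : DecidableRel cell.Adj := inferInstanceAs (DecidableRel (fromRel _).Adj)

/-- The edges from a cell to the next one in the necklace, as pairs of labels. -/
def links : Finset (Fin 6 × Fin 6) := {(0, 3), (1, 4), (4, 2)}

/-- The labels having a neighbour in the previous cell of the necklace. -/
def leftPorts : Finset (Fin 6) := {2, 3, 4}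

/-- The neighbours, in the next cell of the necklace, of a set `A` of vertices of a cell. -/
def linked (A : Finset (Fin 6)) : Finset (Fin 6) := {b | ∃ a ∈ A, (a, b) ∈ links}

/-- `c` is a nonempty union of connected components of the subgraph of a cell induced by `A`. -/
structure IsPiece (A c : Finset (Fin 6)) : Prop where
  nonempty : c.Nonempty
  subset : c ⊆ A
  closed : ∀ a ∈ c, ∀ b ∈ A, cell.Adj a b → b ∈ c

instance (A c : Finset (Fin 6)) : Decidable (IsPiece A c) :=
  decidable_of_iff (c.Nonempty ∧ c ⊆ A ∧ ∀ a ∈ c, ∀ b ∈ A, cell.Adj a b → b ∈ c)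
    ⟨fun ⟨hne, hsub, hcl⟩ => ⟨hne, hsub, hcl⟩, fun h => ⟨h.nonempty, h.subset, h.closed⟩⟩

/-- The number of tokens a cell hands over to the next one, given the set `R` of its neighbours
there. Each vertex of `S` brings two tokens and each component of the necklace minus `S` costs three
tokens in its first cell; with these values every cell can pay. -/
def credit (R : Finset (Fin 6)) : ℕ :=
  match #R with
  | 0 => 3
  | 1 => 2
  | _ => 0

theorem linked_subset_leftPorts (A : Finset (Fin 6)) : linked A ⊆ leftPorts := by
  decide +revert

theorem cell_adj_of_ne {a b c : Fin 6} (hab : a ≠ b) (hac : a ≠ c) (hbc : b ≠ c) :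
    cell.Adj a b ∨ cell.Adj a c ∨ cell.Adj b c := by
  decide +revert

theorem credit_linked_le (A : Finset (Fin 6)) : credit (linked A) ≤ 2 * #Aᶜ := by
  decide +revert +kernel

theorem three_add_credit_linked_le_of_disjoint {A R : Finset (Fin 6)} (hR : R ⊆ leftPorts)
    (hRA : Disjoint R A) : 3 + credit (linked A) ≤ 2 * #Aᶜ + credit R := by
  have key : ∀ R ⊆ leftPorts, ∀ A, Disjoint R A →
      3 + credit (linked A) ≤ 2 * #Aᶜ + credit R := by decide +kernel
  exact key R hR A hRA

namespace IsPiece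

variable {A c R : Finset (Fin 6)}

theorem three_add_credit_linked_le (hc : IsPiece A c) (hcA : c ≠ A) :
    3 + credit (linked A) ≤ 2 * #Aᶜ := by
  have key : ∀ A, ∀ c ⊆ A, c ≠ A → IsPiece A c → 3 + credit (linked A) ≤ 2 * #Aᶜ := by
    decide +kernel
  exact key A c hc.subset hcA hc

theorem two_le_card_compl (hc : IsPiece A c) (hcA : c ≠ A) : 2 ≤ #Aᶜ := by
  have := hc.three_add_credit_linked_le hcA
  omega

theorem six_add_credit_linked_le (hc : IsPiece A c) (hcA : c ≠ A) (hR : R ⊆ leftPorts)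
    (hRA : Disjoint R A) : 6 + credit (linked A) ≤ 2 * #Aᶜ + credit R := by
  have key : ∀ A, ∀ c ⊆ A, c ≠ A → IsPiece A c → ∀ R ⊆ leftPorts \ A,
      6 + credit (linked A) ≤ 2 * #Aᶜ + credit R := by decide +kernel
  exact key A c hc.subset hcA hc R (subset_sdiff.2 ⟨hR, hRA⟩)

theorem three_add_credit_linked_le_of_disjoint (hc : IsPiece A c) (hR : R ⊆ leftPorts)
    (hRc : Disjoint R c) : 3 + credit (linked A) ≤ 2 * #Aᶜ + credit R := by
  obtain rfl | hcA := eq_or_ne c A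
  · exact Gm.three_add_credit_linked_le_of_disjoint hR hRc
  · exact (hc.three_add_credit_linked_le hcA).trans (Nat.le_add_right _ _)

theorem exists_links_of_card_compl_eq_two (hc : IsPiece A c) (hcA : c ≠ A) (hA : #Aᶜ = 2) :
    (∃ a ∈ c, ∃ b, (a, b) ∈ links) ∧ ∃ b ∈ c, ∃ a, (a, b) ∈ links := by
  have key : ∀ A : Finset (Fin 6), #Aᶜ = 2 → ∀ c ⊆ A, c ≠ A → IsPiece A c →
      (∃ a ∈ c, ∃ b, (a, b) ∈ links) ∧ ∃ b ∈ c, ∃ a, (a, b) ∈ links := by decide +kernel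
  exact key A hA c hc.subset hcA hc

end IsPiece

/-! ### The necklace -/

/-- The necklace of `m` cells, each joined to the next one by `links`. For even `m` it is `Gm m`
with the labels in every other block reflected. -/
def necklace (m : ℕ) : SimpleGraph (ZMod m × Fin 6) where
  Adj x y := (x.1 = y.1 ∧ cell.Adj x.2 y.2) ∨
    (y.1 = x.1 + 1 ∧ (x.2, y.2) ∈ links) ∨ (x.1 = y.1 + 1 ∧ (y.2, x.2) ∈ links)
  symm := ⟨fun x y h => by rwa [eq_comm, cell.adj_comm, or_comm (a := _ ∧ (_ ∈ _))]⟩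
  loopless := ⟨fun x => by
    have hlinks : ∀ a, (a, a) ∉ links := by decide
    simp [hlinks]⟩

section Components

variable {m : ℕ} {S : Set (ZMod m × Fin 6)} {C D E : ((necklace m).induce Sᶜ).ConnectedComponent}
  {i k : ZMod m} {a b : Fin 6}

open Classical in
/-- The labels of the vertices of cell `i` outside `S`. -/
noncomputable def alive (S : Set (ZMod m × Fin 6)) (i : ZMod m) : Finset (Fin 6) :=
  {a | (i, a) ∉ S}

open Classical in
/-- The labels of the vertices of cell `i` in the component `C` of the necklace minus `S`. -/
noncomputable def trace (C : ((necklace m).induce Sᶜ).ConnectedComponent) (i : ZMod m) :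
    Finset (Fin 6) :=
  {a | ∃ h : (i, a) ∉ S, ((necklace m).induce Sᶜ).connectedComponentMk ⟨(i, a), h⟩ = C}

theorem mem_alive : a ∈ alive S i ↔ (i, a) ∉ S := by
  simp [alive]

theorem mem_trace : a ∈ trace C i ↔
    ∃ h : (i, a) ∉ S, ((necklace m).induce Sᶜ).connectedComponentMk ⟨(i, a), h⟩ = C := by
  simp [trace]

theorem trace_subset_alive : trace C i ⊆ alive S i := fun _ ha =>
  mem_alive.2 (mem_trace.1 ha).1

theorem exists_mem_trace_of_mem_alive (ha : a ∈ alive S i) :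
    ∃ C : ((necklace m).induce Sᶜ).ConnectedComponent, a ∈ trace C i :=
  ⟨_, mem_trace.2 ⟨mem_alive.1 ha, rfl⟩⟩

theorem eq_of_mem_trace (hC : a ∈ trace C i) (hD : a ∈ trace D i) : C = D := by
  obtain ⟨_, rfl⟩ := mem_trace.1 hC
  obtain ⟨_, rfl⟩ := mem_trace.1 hD
  rfl

theorem exists_trace_nonempty (C : ((necklace m).induce Sᶜ).ConnectedComponent) :
    ∃ i, (trace C i).Nonempty := by
  induction C using ConnectedComponent.ind with | _ v
  exact ⟨v.1.1, v.1.2, mem_trace.2 ⟨v.2, rfl⟩⟩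

theorem mem_trace_of_adj (ha : a ∈ trace C i) (hadj : (necklace m).Adj (i, a) (k, b))
    (hb : b ∈ alive S k) : b ∈ trace C k := by
  obtain ⟨h, rfl⟩ := mem_trace.1 ha
  have hadj' : ((necklace m).induce Sᶜ).Adj ⟨(k, b), mem_alive.1 hb⟩ ⟨(i, a), h⟩ := hadj.symm
  exact mem_trace.2 ⟨mem_alive.1 hb, ConnectedComponent.sound hadj'.reachable⟩

theorem isPiece_trace (hC : (trace C i).Nonempty) : IsPiece (alive S i) (trace C i) where
  nonempty := hC
  subset := trace_subset_alive
  closed _ ha _ hb hadj := mem_trace_of_adj ha (Or.inl ⟨rfl, hadj⟩) hb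

theorem trace_ne_alive (hCD : C ≠ D) (hD : (trace D i).Nonempty) : trace C i ≠ alive S i := by
  obtain ⟨a, ha⟩ := hD
  exact fun h => hCD (eq_of_mem_trace (h ▸ trace_subset_alive ha) ha)

theorem not_cell_adj_of_mem_trace (hCD : C ≠ D) (ha : a ∈ trace C i) (hb : b ∈ trace D i) :
    ¬ cell.Adj a b := fun hadj =>
  hCD (eq_of_mem_trace ((isPiece_trace ⟨a, ha⟩).closed a ha b (trace_subset_alive hb) hadj) hb)

theorem eq_or_eq_of_trace_nonempty (hCD : C ≠ D) (hC : (trace C i).Nonempty)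
    (hD : (trace D i).Nonempty) (hE : (trace E i).Nonempty) : E = C ∨ E = D := by
  obtain ⟨a, ha⟩ := hC
  obtain ⟨b, hb⟩ := hD
  obtain ⟨e, he⟩ := hE
  have hne {C D : ((necklace m).induce Sᶜ).ConnectedComponent} {a b : Fin 6} (hCD : C ≠ D)
      (ha : a ∈ trace C i) (hb : b ∈ trace D i) : a ≠ b :=
    fun hab => hCD (eq_of_mem_trace ha (hab ▸ hb))
  by_contra! hECD
  obtain h | h | h := cell_adj_of_ne (hne hCD ha hb) (hne hECD.1.symm ha he)
    (hne hECD.2.symm hb he)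
  · exact not_cell_adj_of_mem_trace hCD ha hb h
  · exact not_cell_adj_of_mem_trace hECD.1.symm ha he h
  · exact not_cell_adj_of_mem_trace hECD.2.symm hb he h

theorem ncard_eq_sum_card_compl_alive [NeZero m] (S : Set (ZMod m × Fin 6)) :
    S.ncard = ∑ i, #(alive S i)ᶜ := by
  classical
  simp_rw [Set.ncard_eq_toFinset_card', Set.toFinset_card, Fintype.card_subtype, card_filter,
    Fintype.sum_prod_type, alive, compl_filter, card_filter, not_not]

/-! ### Components missing a cell -/

theorem disjoint_linked_trace (hC : trace C i = ∅) :
    Disjoint (linked (alive S i)) (trace C (i + 1)) := by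
  refine Finset.disjoint_left.2 fun b hb hbC => ?_
  obtain ⟨a, ha, hab⟩ : ∃ a ∈ alive S i, (a, b) ∈ links := by simpa [linked] using hb
  have haC : a ∈ trace C i := mem_trace_of_adj hbC (Or.inr (Or.inr ⟨rfl, hab⟩)) ha
  simp [hC] at haC

/-- The components of the necklace minus `S` that meet cell `i + 1` but not cell `i`. -/
def starting (S : Set (ZMod m × Fin 6)) (i : ZMod m) :
    Set ((necklace m).induce Sᶜ).ConnectedComponent :=
  {C | trace C i = ∅ ∧ (trace C (i + 1)).Nonempty}

theorem disjoint_linked_alive (hCD : C ≠ D) (hC : C ∈ starting S i) (hD : D ∈ starting S i) :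
    Disjoint (linked (alive S i)) (alive S (i + 1)) := by
  refine Finset.disjoint_right.2 fun a ha => ?_
  obtain ⟨E, hE⟩ := exists_mem_trace_of_mem_alive ha
  obtain rfl | rfl := eq_or_eq_of_trace_nonempty hCD hC.2 hD.2 ⟨a, hE⟩
  · exact Finset.disjoint_right.1 (disjoint_linked_trace hC.1) hE
  · exact Finset.disjoint_right.1 (disjoint_linked_trace hD.1) hE

theorem three_mul_ncard_starting_add_credit_le [NeZero m] (S : Set (ZMod m × Fin 6)) (i : ZMod m) :
    3 * (starting S i).ncard + credit (linked (alive S (i + 1))) ≤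
      2 * #(alive S (i + 1))ᶜ + credit (linked (alive S i)) := by
  have hports := linked_subset_leftPorts (alive S i)
  obtain h0 | h1 | h2 : (starting S i).ncard = 0 ∨ (starting S i).ncard = 1 ∨
      1 < (starting S i).ncard := by omega
  · have := credit_linked_le (alive S (i + 1))
    omega
  · obtain ⟨C, hC⟩ := (Set.ncard_pos).1 (h1.symm ▸ one_pos)
    have := (isPiece_trace hC.2).three_add_credit_linked_le_of_disjoint hports
      (disjoint_linked_trace hC.1)
    omega
  · obtain ⟨C, hC, D, hD, hCD⟩ := (Set.one_lt_ncard).1 h2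
    have hle : (starting S i).ncard ≤ 2 :=
      (Set.ncard_le_ncard (t := {C, D}) fun E hE =>
        eq_or_eq_of_trace_nonempty hCD hC.2 hD.2 hE.2).trans_eq (Set.ncard_pair hCD)
    have := (isPiece_trace hC.2).six_add_credit_linked_le (trace_ne_alive hCD hD.2) hports
      (disjoint_linked_alive hCD hC hD)
    omega

theorem three_mul_numComp_le_of_forall_missed [NeZero m]
    (hmiss : ∀ C : ((necklace m).induce Sᶜ).ConnectedComponent, ∃ i, trace C i = ∅) :
    3 * numComp (necklace m) S ≤ 2 * S.ncard := by
  have hcover : ⋃ i, starting S i = Set.univ := by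
    refine Set.eq_univ_of_forall fun C => Set.mem_iUnion.2 ?_
    obtain ⟨i, hi⟩ := hmiss C
    obtain ⟨k, hk⟩ := exists_trace_nonempty C
    obtain ⟨l, hl, hl'⟩ := exists_not_and_add_one (p := fun i => (trace C i).Nonempty)
      (Finset.not_nonempty_iff_eq_empty.2 hi) hk
    exact ⟨l, Finset.not_nonempty_iff_eq_empty.1 hl, hl'⟩
  have hcount : numComp (necklace m) S ≤ ∑ i, (starting S i).ncard := by
    rw [numComp, ← Set.ncard_univ, ← hcover]
    exact Set.ncard_iUnion_le_of_fintype _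
  have hshift (f : ZMod m → ℕ) : ∑ i, f (i + 1) = ∑ i, f i := Equiv.sum_comp (Equiv.addRight 1) f
  have hsum := sum_le_sum fun i (_ : i ∈ univ) => three_mul_ncard_starting_add_credit_le S i
  rw [sum_add_distrib, sum_add_distrib, ← mul_sum, ← mul_sum,
    hshift fun i => credit (linked (alive S i)), hshift fun i => #(alive S i)ᶜ,
    ← ncard_eq_sum_card_compl_alive] at hsum
  omega

/-! ### A component meeting every cell -/

open Classical in
/-- The cells met by some component other than `C`. -/
noncomputable def sharedCells [NeZero m] (C : ((necklace m).induce Sᶜ).ConnectedComponent) :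
    Finset (ZMod m) :=
  {i | ∃ D, D ≠ C ∧ (trace D i).Nonempty}

theorem mem_sharedCells [NeZero m] :
    i ∈ sharedCells C ↔ ∃ D, D ≠ C ∧ (trace D i).Nonempty := by
  simp [sharedCells]

theorem two_le_card_compl_alive [NeZero m] (hC : ∀ i, (trace C i).Nonempty)
    (hi : i ∈ sharedCells C) : 2 ≤ #(alive S i)ᶜ := by
  obtain ⟨D, hDC, hD⟩ := mem_sharedCells.1 hi
  exact (isPiece_trace hD).two_le_card_compl (trace_ne_alive hDC (hC i))

theorem numComp_le_card_sharedCells_add_one [NeZero m] (hC : ∀ i, (trace C i).Nonempty) :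
    numComp (necklace m) S ≤ #(sharedCells C) + 1 := by
  choose cellOf hcellOf using exists_trace_nonempty (m := m) (S := S)
  have hothers : ({C}ᶜ : Set ((necklace m).induce Sᶜ).ConnectedComponent).ncard ≤
      #(sharedCells C) := by
    rw [← Set.ncard_coe_finset]
    refine Set.ncard_le_ncard_of_injOn cellOf
      (fun D hD => mem_sharedCells.2 ⟨D, hD, hcellOf D⟩) fun D hD E hE hDE => ?_
    exact ((eq_or_eq_of_trace_nonempty (Ne.symm hD) (hC _) (hcellOf D)
      (hDE ▸ hcellOf E)).resolve_left hE).symm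
  have := Set.ncard_add_ncard_compl {C}
  rw [Set.ncard_singleton] at this
  rw [numComp]
  omega

theorem compl_alive_nonempty_of_adj [NeZero m] (hC : ∀ i, (trace C i).Nonempty) (hDC : D ≠ C)
    (ha : a ∈ trace D i) (hadj : (necklace m).Adj (i, a) (k, b)) : (alive S k)ᶜ.Nonempty := by
  by_contra hempty
  rw [Finset.not_nonempty_iff_eq_empty] at hempty
  have hb : b ∈ alive S k := by simp [compl_eq_empty_iff _ |>.1 hempty]
  have := two_le_card_compl_alive hC
    (mem_sharedCells.2 ⟨D, hDC, b, mem_trace_of_adj ha hadj hb⟩)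
  simp [hempty] at this

/-- The contribution of cell `i` to `2 * |S| - 3 * #(sharedCells C)`. -/
noncomputable def excess [NeZero m] (C : ((necklace m).induce Sᶜ).ConnectedComponent)
    (i : ZMod m) : ℤ :=
  2 * #(alive S i)ᶜ - if i ∈ sharedCells C then 3 else 0

theorem sum_excess [NeZero m] (C : ((necklace m).induce Sᶜ).ConnectedComponent) :
    ∑ i, excess C i = 2 * S.ncard - 3 * #(sharedCells C) := by
  simp [excess, ncard_eq_sum_card_compl_alive S, mul_sum, mul_comm]

theorem one_le_excess [NeZero m] (hC : ∀ i, (trace C i).Nonempty)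
    (hi : (alive S i)ᶜ.Nonempty) : 1 ≤ excess C i := by
  have hpos := hi.card_pos
  have htwo := two_le_card_compl_alive (i := i) hC
  grind [excess]

theorem excess_nonneg [NeZero m] (hC : ∀ i, (trace C i).Nonempty) (i : ZMod m) :
    0 ≤ excess C i := by
  have htwo := two_le_card_compl_alive (i := i) hC
  grind [excess]

theorem three_le_sum_excess_of_card_compl_eq_two [NeZero m] (hm : 3 ≤ m)
    (hC : ∀ i, (trace C i).Nonempty) (hDC : D ≠ C) (hD : (trace D i).Nonempty)
    (hi : #(alive S i)ᶜ = 2) : 3 ≤ ∑ k, excess C k := by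
  obtain ⟨⟨a, ha, b, hab⟩, c, hc, d, hdc⟩ :=
    (isPiece_trace hD).exists_links_of_card_compl_eq_two (trace_ne_alive hDC (hC i)) hi
  have hself : 1 ≤ excess C i := one_le_excess hC (card_pos.1 (by omega))
  have hnext : 1 ≤ excess C (i + 1) :=
    one_le_excess hC (compl_alive_nonempty_of_adj hC hDC ha (.inr (.inl ⟨rfl, hab⟩)))
  have hprev : 1 ≤ excess C (i - 1) := one_le_excess hC
    (compl_alive_nonempty_of_adj hC hDC hc (.inr (.inr ⟨(sub_add_cancel i 1).symm, hdc⟩)))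
  have : Fact (1 < m) := ⟨by omega⟩
  calc 3 ≤ excess C (i - 1) + (excess C i + excess C (i + 1)) := by omega
    _ = ∑ k ∈ {i - 1, i, i + 1}, excess C k := by
      rw [sum_insert (by simp [sub_one_ne_add_one hm]), sum_pair (by simp)]
    _ ≤ ∑ k, excess C k :=
      sum_le_sum_of_subset_of_nonneg (subset_univ _) fun k _ _ => excess_nonneg hC k

theorem three_le_sum_excess [NeZero m] (hm : 3 ≤ m) (hC : ∀ i, (trace C i).Nonempty)
    (hDC : D ≠ C) : 3 ≤ ∑ i, excess C i := by
  obtain ⟨i, hD⟩ := exists_trace_nonempty D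
  have hi : i ∈ sharedCells C := mem_sharedCells.2 ⟨D, hDC, hD⟩
  obtain htwo | hthree := (two_le_card_compl_alive hC hi).eq_or_lt
  · exact three_le_sum_excess_of_card_compl_eq_two hm hC hDC hD htwo.symm
  · calc 3 ≤ excess C i := by simp only [excess, hi, if_true]; omega
      _ ≤ ∑ i, excess C i := single_le_sum (fun i _ => excess_nonneg hC i) (mem_univ i)

theorem three_mul_numComp_le_of_forall_met [NeZero m] (hm : 3 ≤ m)
    (hS : 2 ≤ numComp (necklace m) S) (hC : ∀ i, (trace C i).Nonempty) :
    3 * numComp (necklace m) S ≤ 2 * S.ncard := by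
  have : Nontrivial ((necklace m).induce Sᶜ).ConnectedComponent :=
    Finite.one_lt_card_iff_nontrivial.1 hS
  obtain ⟨D, hDC⟩ := exists_ne C
  have hexcess := three_le_sum_excess hm hC hDC
  have hcount := numComp_le_card_sharedCells_add_one hC
  rw [sum_excess] at hexcess
  omega

end Components

theorem three_mul_numComp_necklace_le {m : ℕ} (hm : 3 ≤ m) {S : Set (ZMod m × Fin 6)}
    (hS : 2 ≤ numComp (necklace m) S) : 3 * numComp (necklace m) S ≤ 2 * S.ncard := by
  have : NeZero m := ⟨by omega⟩
  by_cases hC : ∃ C : ((necklace m).induce Sᶜ).ConnectedComponent, ∀ i, (trace C i).Nonempty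
  · obtain ⟨C, hC⟩ := hC
    exact three_mul_numComp_le_of_forall_met hm hS hC
  · push Not at hC
    exact three_mul_numComp_le_of_forall_missed hC

theorem ndeg_necklace {m : ℕ} (hm : 3 ≤ m) (v : ZMod m × Fin 6) : ndeg (necklace m) v = 4 := by
  obtain ⟨i, a⟩ := v
  have : Fact (1 < m) := ⟨by omega⟩
  have hsub := sub_one_ne_add_one hm i
  have hnbrs : (necklace m).neighborSet (i, a) = ↑(({i} ×ˢ ({b | cell.Adj a b} : Finset _)) ∪
      (({i + 1} ×ˢ ({b | (a, b) ∈ links} : Finset _)) ∪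
        ({i - 1} ×ˢ ({b | (b, a) ∈ links} : Finset _)))) := by
    ext ⟨k, b⟩
    simp only [mem_neighborSet, necklace, coe_union, coe_product, coe_singleton, coe_filter_univ,
      Set.mem_union, Set.mem_prod, Set.mem_singleton_iff, Set.mem_ofPred_eq, eq_sub_iff_add_eq,
      eq_comm (a := i)]
  have hlabels (a : Fin 6) :
      #{b | cell.Adj a b} + (#{b | (a, b) ∈ links} + #{b | (b, a) ∈ links}) = 4 := by
    decide +revert
  rw [ndeg, hnbrs, Set.ncard_coe_finset, card_union_of_disjoint, card_union_of_disjoint]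
  · simpa using hlabels a
  · exact disjoint_product.2 (.inl (by simpa using hsub.symm))
  · exact disjoint_union_right.2 ⟨disjoint_product.2 (.inl (by simp)),
      disjoint_product.2 (.inl (by simp [eq_sub_iff_add_eq]))⟩

/-! ### The graph `Gm m` as a necklace -/

/-- The reflection of a cell that exchanges the two kinds of blocks of `Gm m`. -/
def reflect : Equiv.Perm (Fin 6) :=
  Function.Involutive.toPerm ![3, 2, 1, 0, 4, 5] (by unfold Function.Involutive; decide)

/-- The label in the necklace of the vertex `(i, a)` of `Gm m`. -/
def relabel {m : ℕ} (i : ZMod m) : Equiv.Perm (Fin 6) :=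
  if Even i.val then 1 else reflect

theorem cell_adj_relabel_iff {m : ℕ} (i : ZMod m) (a b : Fin 6) :
    cell.Adj (relabel i a) (relabel i b) ↔ cell.Adj a b := by
  have hreflect : ∀ a b, cell.Adj (reflect a) (reflect b) ↔ cell.Adj a b := by decide
  unfold relabel
  split_ifs
  · rfl
  · exact hreflect a b

theorem relabel_mem_links_iff {m : ℕ} [NeZero m] (hm : Even m) (i : ZMod m) (a b : Fin 6) :
    (relabel i a, relabel (i + 1) b) ∈ links ↔
      (i.val % 2 = 0 ∧ ((a = 0 ∧ b = 0) ∨ (a = 1 ∧ b = 4) ∨ (a = 4 ∧ b = 1))) ∨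
      (i.val % 2 = 1 ∧ ((a = 3 ∧ b = 3) ∨ (a = 2 ∧ b = 4) ∨ (a = 4 ∧ b = 2))) := by
  have hsucc := even_val_add_one_iff hm i
  obtain h | h := Nat.mod_two_eq_zero_or_one i.val
  · simp only [relabel, hsucc, Nat.even_iff, h]
    decide +revert
  · simp only [relabel, hsucc, Nat.even_iff, h]
    decide +revert

theorem gmRel_iff {m : ℕ} [NeZero m] (hm : Even m) (x y : ZMod m × Fin 6) :
    gmRel m x y ↔ (x.1 = y.1 ∧ (x.2, y.2) ∈ cellEdges) ∨
      (y.1 = x.1 + 1 ∧ (relabel x.1 x.2, relabel y.1 y.2) ∈ links) := by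
  have hcell (a b : Fin 6) : (a, b) ∈ cellEdges ↔
      (a = 0 ∧ b = 1) ∨ (a = 1 ∧ b = 2) ∨ (a = 2 ∧ b = 3) ∨ (a = 3 ∧ b = 4) ∨
        (a = 4 ∧ b = 0) ∨ (a = 5 ∧ (b = 0 ∨ b = 1 ∨ b = 2 ∨ b = 3)) := by
    decide +revert
  have hlinks := and_congr_right fun h : y.1 = x.1 + 1 =>
    h ▸ relabel_mem_links_iff hm x.1 x.2 y.2
  rw [and_or_left] at hlinks
  rw [hlinks, hcell]
  rfl

theorem necklace_adj_relabel_iff {m : ℕ} [NeZero m] (hm : Even m) (x y : ZMod m × Fin 6) :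
    (necklace m).Adj (x.1, relabel x.1 x.2) (y.1, relabel y.1 y.2) ↔ (Gm m).Adj x y := by
  have hcell : (x.1 = y.1 ∧ cell.Adj (relabel x.1 x.2) (relabel y.1 y.2)) ↔
      x.1 = y.1 ∧ x.2 ≠ y.2 ∧ ((x.2, y.2) ∈ cellEdges ∨ (y.2, x.2) ∈ cellEdges) :=
    and_congr_right fun h => h ▸ cell_adj_relabel_iff x.1 x.2 y.2
  have hne : (necklace m).Adj (x.1, relabel x.1 x.2) (y.1, relabel y.1 y.2) → x ≠ y :=
    fun hadj hxy => hadj.ne (by rw [hxy])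
  rw [Gm, fromRel_adj, gmRel_iff hm, gmRel_iff hm]
  simp only [necklace, hcell] at hne ⊢
  grind

/-- For even `m`, the isomorphism of `Gm m` with the necklace that reflects every odd block. -/
def isoNecklace {m : ℕ} [NeZero m] (hm : Even m) : Gm m ≃g necklace m where
  toEquiv := Equiv.prodShear (Equiv.refl _) relabel
  map_rel_iff' := necklace_adj_relabel_iff hm _ _

end Gm

/-- for every even `m ≥ 4`, the graph `G_m` is 4-regular and
3/2-tough: every vertex set `S` whose removal leaves at least 2 components
satisfies `2|S| ≥ 3·ω(G_m − S)`. -/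
theorem Gm_four_regular_and_three_halves_tough (m : ℕ) (hm4 : 4 ≤ m) (hme : Even m) :
    (∀ v : ZMod m × Fin 6, ndeg (Gm m) v = 4) ∧
    (∀ S : Set (ZMod m × Fin 6), 2 ≤ numComp (Gm m) S →
      3 * numComp (Gm m) S ≤ 2 * S.ncard) := by
  have : NeZero m := ⟨by omega⟩
  have hm3 : 3 ≤ m := by omega
  let φ : Gm m ≃g Gm.necklace m := Gm.isoNecklace hme
  refine ⟨fun v => ?_, fun S hS => ?_⟩
  · rw [← ndeg_apply_iso φ, Gm.ndeg_necklace hm3]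
  · have hcomp : numComp (Gm m) S = numComp (Gm.necklace m) (φ '' S) := by
      rw [← numComp_preimage_iso φ, Set.preimage_image_eq S φ.injective]
    rw [hcomp] at hS ⊢
    rw [← Set.ncard_image_of_injective S φ.injective]
    exact Gm.three_mul_numComp_necklace_le hm3 hS
end

section
/- Let m ≥ 4 be an even integer and let G_m be the graph with vertex set {v_{i,j} : 1 ≤ i ≤ m, 1 ≤ j ≤ 6} and the following edges: for each i, the 5-cycle v_{i,1}v_{i,2}, v_{i,2}v_{i,3}, v_{i,3}v_{i,4}, v_{i,4}v_{i,5}, v_{i,5}v_{i,1}; for each i, the edges v_{i,6}v_{i,j} for j ∈ {1,2,3,4}; for each even i, the edges v_{i,1}v_{i+1,1}, v_{i,2}v_{i+1,5}, v_{i,5}v_{i+1,2}; and for each odd i, the edges v_{i,4}v_{i+1,4}, v_{i,3}v_{i+1,5}, v_{i,5}v_{i+1,3}, where the first index is taken modulo m. Then G_m is minimally 3/2-tough: G_m is 3/2-tough, and for every edge e of G_m there exists a vertex set S such that ω((G_m − e) − S) ≥ 2 and 2|S| < 3·ω((G_m − e) − S). -/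
open SimpleGraph

/-!
Encode a set of deleted vertices together with the components that remain as a partial colouring of
the vertices, with one colour per component.

Toughness is proved by discharging. Every block sends a charge through each of its two sides, which
depends only on how many of the three ports of that side survive. Inside a block, the deleted
vertices pay for the colours and for the charge sent out; between consecutive blocks, the two
charges that meet can have a negative sum only if some colour crosses. Summing over the blocks gives
`3 * (pairs of a block and a colour in it) ≤ 2 * (deleted vertices) + 3 * (crossings)`.
A component that misses some block has fewer crossings than blocks it meets, which settles the case
where no component meets all blocks. A component that meets all blocks leaves at most one further
colour to every block, and each block with two colours has at least two deleted vertices; if there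
are at most two such blocks, one more vertex is deleted.

For minimality, the reflections of the cycle of blocks reduce the edges to seven of them, lying in
the first two blocks. After removing such an edge, a colouring of the first four blocks which
disconnects more than toughness permits is continued around the cycle by alternating a block with
two and a block with four deleted vertices, both with two colours.
-/

namespace GmTough

section Toughness

variable {V W K : Type*} {G : SimpleGraph V} {H : SimpleGraph W}

/-- `t`-toughness of a graph. For the infinite sets `S` of an infinite graph, `S.ncard` is `0`, so
the definition is meant for finite graphs. -/
def IsTough (t : ℝ) (G : SimpleGraph V) : Prop :=
  ∀ S : Set V, 2 ≤ numComp G S → t * numComp G S ≤ S.ncard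

theorem isTough_three_halves_iff :
    IsTough (3 / 2) G ↔ ∀ S : Set V, 2 ≤ numComp G S → 3 * numComp G S ≤ 2 * S.ncard := by
  refine forall₂_congr fun S _ ↦ ?_
  rw [← @Nat.cast_le ℝ]
  push_cast
  constructor <;> intro h <;> linarith

theorem numComp_image_iso (φ : G ≃g H) (S : Set V) : numComp H (φ '' S) = numComp G S := by
  have e : G.induce Sᶜ ≃g H.induce (φ '' S)ᶜ :=
    { toEquiv := φ.toEquiv.subtypeEquiv fun x ↦ by simp
      map_rel_iff' := φ.map_adj_iff }
  exact (Nat.card_congr e.connectedComponentEquiv).symm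

theorem IsTough.of_iso {t : ℝ} (φ : G ≃g H) (h : IsTough t G) : IsTough t H := by
  intro S hS
  rw [← numComp_image_iso φ.symm, ← Set.ncard_image_of_injective S φ.symm.injective] at *
  exact h _ hS

theorem isTough_deleteEdges_iff {t : ℝ} (φ : G ≃g H) (e : Sym2 V) :
    IsTough t (G.deleteEdges {e}) ↔ IsTough t (H.deleteEdges {e.map φ}) := by
  have ψ : G.deleteEdges {e} ≃g H.deleteEdges {e.map φ} :=
    { toEquiv := φ.toEquiv
      map_rel_iff' := by
        intro x y
        have h : s(φ x, φ y) = e.map φ ↔ s(x, y) = e :=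
          (Sym2.map.injective φ.injective).eq_iff (a := s(x, y))
        simp [h, φ.map_adj_iff] }
  exact ⟨.of_iso ψ, .of_iso ψ.symm⟩

/-- A colouring in which `none` marks the deleted vertices and the two ends of every surviving edge
have the same colour: every colour class is a union of components of the remaining graph. -/
def IsComponentColouring (G : SimpleGraph V) (κ : V → Option K) : Prop :=
  ∀ x y, G.Adj x y → κ x = none ∨ κ y = none ∨ κ x = κ y

instance [Fintype V] [DecidableEq K] [DecidableRel G.Adj] (κ : V → Option K) :
    Decidable (IsComponentColouring G κ) := by
  unfold IsComponentColouring
  infer_instance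

theorem IsComponentColouring.eq_of_adj {κ : V → Option K} (h : IsComponentColouring G κ) {x y : V}
    (hxy : G.Adj x y) {c d : K} (hx : κ x = some c) (hy : κ y = some d) : c = d := by
  simpa [hx, hy] using h x y hxy

theorem IsComponentColouring.map {L : Type*} {κ : V → Option K} (h : IsComponentColouring G κ)
    (g : K → L) : IsComponentColouring G fun x ↦ (κ x).map g := by
  intro x y hxy
  rcases h x y hxy with h | h | h <;> simp [h]

theorem exists_isComponentColouring (G : SimpleGraph V) (S : Set V) :
    ∃ κ : V → Option (G.induce Sᶜ).ConnectedComponent,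
      IsComponentColouring G κ ∧ {x | κ x = none} = S ∧ ∀ c, ∃ x, κ x = some c := by
  classical
  refine ⟨fun x ↦ if hx : x ∈ S then none else some ((G.induce Sᶜ).connectedComponentMk ⟨x, hx⟩),
    fun x y hxy ↦ ?_, by ext; simp, fun c ↦ ?_⟩
  · by_cases hx : x ∈ S
    · simp [hx]
    · by_cases hy : y ∈ S
      · simp [hy]
      · have hadj : (G.induce Sᶜ).Adj ⟨x, hx⟩ ⟨y, hy⟩ := hxy
        simp [hx, hy, hadj.reachable]
  · obtain ⟨x, rfl⟩ := c.exists_rep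
    exact ⟨x, dif_neg x.2⟩

variable [Fintype V]

/-- The uncoloured (deleted) vertices of a partial colouring. -/
def uncoloured (f : V → Option K) : Finset V :=
  {x | f x = none}

@[simp]
theorem mem_uncoloured {f : V → Option K} {x : V} : x ∈ uncoloured f ↔ f x = none := by
  simp [uncoloured]

theorem ncard_setOf_eq_none (f : V → Option K) : {x | f x = none}.ncard = (uncoloured f).card := by
  rw [← Set.ncard_coe_finset]
  simp [uncoloured]

theorem uncoloured_map {L : Type*} (g : K → L) (f : V → Option K) :
    uncoloured (fun x ↦ (f x).map g) = uncoloured f := by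
  simp only [uncoloured, Option.map_eq_none_iff]

variable [DecidableEq K]

/-- The colours occurring in a partial colouring. -/
def palette (f : V → Option K) : Finset K :=
  (Finset.univ.image f).eraseNone

@[simp]
theorem mem_palette {f : V → Option K} {c : K} : c ∈ palette f ↔ ∃ x, f x = some c := by
  simp [palette]

theorem mem_palette_of_eq_some {f : V → Option K} {c : K} {x : V} (h : f x = some c) :
    c ∈ palette f :=
  mem_palette.mpr ⟨x, h⟩

theorem palette_map {L : Type*} [DecidableEq L] (g : K → L) (f : V → Option K) :
    palette (fun x ↦ (f x).map g) = (palette f).image g := by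
  ext c
  simp only [mem_palette, Option.map_eq_some_iff, Finset.mem_image]
  grind

theorem IsComponentColouring.card_palette_le_numComp {κ : V → Option K}
    (h : IsComponentColouring G κ) : (palette κ).card ≤ numComp G {x | κ x = none} := by
  set S : Set V := {x | κ x = none}
  have hreach : ∀ x y : ↥Sᶜ, (G.induce Sᶜ).Reachable x y → κ x = κ y := by
    rintro x y ⟨p⟩
    induction p with
    | nil => rfl
    | @cons u v _ huv _ ih => exact ((h u v huv).resolve_left u.2 |>.resolve_left v.2).trans ih
  choose v hv using fun c : palette κ ↦ mem_palette.mp c.2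
  have hmem : ∀ c, v c ∈ Sᶜ := fun c hc ↦ by cases (hv c).symm.trans hc
  have hinj : Function.Injective fun c ↦ (G.induce Sᶜ).connectedComponentMk ⟨v c, hmem c⟩ := by
    intro c d hcd
    have hκ := hreach _ _ (ConnectedComponent.exact hcd)
    simpa only [hv, Option.some_inj, SetCoe.ext_iff] using hκ
  rw [← Nat.card_eq_finsetCard]
  exact Nat.card_le_card_of_injective _ hinj

end Toughness

section Blocks

variable {I J K : Type*}

/-- The partial colouring of a graph that is cut up into blocks, assembled from partial colourings
of the blocks; different blocks get different colours. -/
def blockColouring (f : I → J → Option K) (x : I × J) : Option (I × K) :=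
  (f x.1 x.2).map (Prod.mk x.1)

theorem blockColouring_eq_some_iff {f : I → J → Option K} {x : I × J} {c : I × K} :
    blockColouring f x = some c ↔ x.1 = c.1 ∧ f x.1 x.2 = some c.2 := by
  obtain ⟨i, c⟩ := c
  simp only [blockColouring, Option.map_eq_some_iff, Prod.mk.injEq]
  grind

variable [Fintype J]

theorem card_uncoloured_prod [Fintype I] (κ : I × J → Option K) :
    (uncoloured κ).card = ∑ i, (uncoloured fun a ↦ κ (i, a)).card := by
  simp only [uncoloured, Finset.card_filter, Fintype.sum_prod_type]

theorem card_uncoloured_blockColouring [Fintype I] (f : I → J → Option K) :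
    (uncoloured (blockColouring f)).card = ∑ i, (uncoloured (f i)).card :=
  (card_uncoloured_prod _).trans <| by simp only [blockColouring, uncoloured_map]

variable [DecidableEq K]

/-- Twice the number of deleted vertices minus three times the number of colours of a block; a
negative total over all blocks shows that a graph is not `3 / 2`-tough. -/
def excess (f : J → Option K) : ℤ :=
  2 * (uncoloured f).card - 3 * (palette f).card

variable [Fintype I]

theorem card_palette_blockColouring [DecidableEq I] (f : I → J → Option K) :
    (palette (blockColouring f)).card = ∑ i, (palette (f i)).card := by
  have hunion : palette (blockColouring f) =
      Finset.univ.biUnion fun i ↦ (palette (f i)).map (.sectR i K) := by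
    ext ⟨i, c⟩
    simp [blockColouring_eq_some_iff]
  rw [hunion, Finset.card_biUnion]
  · simp only [Finset.card_map]
  · intro i _ j _ hij
    simp only [Finset.disjoint_left, Finset.mem_map, Function.Embedding.sectR_apply]
    grind

theorem IsComponentColouring.not_isTough_three_halves {H : SimpleGraph (I × J)}
    {f : I → J → Option K} (h : IsComponentColouring H (blockColouring f))
    (hsum : ∑ i, excess (f i) < 0) {i : I} (hi : 2 ≤ (palette (f i)).card) :
    ¬ IsTough (3 / 2) H := by
  classical
  rw [isTough_three_halves_iff]
  push Not
  have hcomp := h.card_palette_le_numComp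
  rw [card_palette_blockColouring] at hcomp
  refine ⟨_, (hi.trans ?_).trans hcomp, ?_⟩
  · exact Finset.single_le_sum (f := fun i ↦ (palette (f i)).card) (fun _ _ ↦ Nat.zero_le _)
      (Finset.mem_univ i)
  · simp only [excess, Finset.sum_sub_distrib, ← Finset.mul_sum] at hsum
    rw [ncard_setOf_eq_none, card_uncoloured_blockColouring]
    push_cast [← Nat.cast_sum] at hsum
    omega

end Blocks

section BlockGraphs

variable {I I' : Type*}

/-- The graph induced on a block: the cycle `0, 1, 2, 3, 4` and the hub `5`. -/
def block : SimpleGraph (Fin 6) :=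
  fromRel fun a b ↦ (a, b) ∈
    ({(0, 1), (1, 2), (2, 3), (3, 4), (4, 0), (5, 0), (5, 1), (5, 2), (5, 3)} : Finset _)

instance : DecidableRel block.Adj := by
  unfold block
  infer_instance

/-- The vertices of a block that carry the edges to the neighbouring block on one side: the next
block for a block of parity `p`, the preceding one for a block of the other parity. -/
def ports (p : ZMod 2) : Finset (Fin 6) :=
  if p = 0 then {0, 1, 4} else {3, 2, 4}

/-- The edges from a block of parity `p` to the next block join every port `a` to
`partner p a`. -/
def partner (p : ZMod 2) : Equiv.Perm (Fin 6) :=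
  if p = 0 then Equiv.swap 1 4 else Equiv.swap 2 4

/-- `link p a b` says that vertex `a` of a block of parity `p` is adjacent to vertex `b` of the
next block. -/
def link (p : ZMod 2) (a b : Fin 6) : Prop :=
  a ∈ ports p ∧ b = partner p a

instance (p : ZMod 2) (a b : Fin 6) : Decidable (link p a b) :=
  inferInstanceAs (Decidable (_ ∧ _))

/-- The graph consisting of a copy of `block` for every index in `I`, of parity `par i`, and of the
links from each block to its successors. -/
def blockGraph (succ : I → I → Prop) (par : I → ZMod 2) : SimpleGraph (I × Fin 6) :=
  fromRel fun x y ↦ x.1 = y.1 ∧ block.Adj x.2 y.2 ∨ succ x.1 y.1 ∧ link (par x.1) x.2 y.2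

theorem blockGraph_adj {succ : I → I → Prop} (hsucc : ∀ i, ¬ succ i i) {par : I → ZMod 2}
    {x y : I × Fin 6} : (blockGraph succ par).Adj x y ↔
      x.1 = y.1 ∧ block.Adj x.2 y.2 ∨ succ x.1 y.1 ∧ link (par x.1) x.2 y.2 ∨
        succ y.1 x.1 ∧ link (par y.1) y.2 x.2 := by
  obtain ⟨i, a⟩ := x
  obtain ⟨j, b⟩ := y
  have hirrefl : block.Adj a b → a ≠ b := Adj.ne
  simp only [blockGraph, fromRel_adj, ne_eq, Prod.mk.injEq, block.adj_comm b a, eq_comm (a := j)]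
  by_cases hij : i = j
  · subst hij
    simp only [hsucc, true_and, false_and, or_false, or_self]
    exact ⟨fun h ↦ h.2, fun h ↦ ⟨hirrefl h, h⟩⟩
  · tauto

end BlockGraphs

section GmStructure

variable {m : ℕ}

/-- The parity of a block of `G_m`; it is additive only if `m` is even. -/
def parity (i : ZMod m) : ZMod 2 :=
  i.cast

theorem parity_add_one (he : Even m) (i : ZMod m) : parity (i + 1) = parity i + 1 := by
  simp only [parity, ZMod.cast_add he.two_dvd, ZMod.cast_one he.two_dvd]

theorem parity_sub (he : Even m) (i j : ZMod m) : parity (i - j) = parity i - parity j :=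
  ZMod.cast_sub he.two_dvd i j

theorem parity_eq_natCast_val [NeZero m] (i : ZMod m) : parity i = i.val :=
  (ZMod.natCast_val i).symm

theorem gm_eq_blockGraph [NeZero m] : Gm m = blockGraph (fun i j ↦ j = i + 1) parity := by
  have hparity : ∀ i : ZMod m,
      (parity i = 0 ↔ i.val % 2 = 0) ∧ (parity i = 1 ↔ i.val % 2 = 1) := by
    intro i
    rw [parity_eq_natCast_val, ZMod.natCast_eq_zero_iff_even, ZMod.natCast_eq_one_iff_odd,
      Nat.even_iff, Nat.odd_iff]
    exact ⟨.rfl, .rfl⟩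
  have hlink : ∀ p a b, link p a b ↔
      p = 0 ∧ (a = 0 ∧ b = 0 ∨ a = 1 ∧ b = 4 ∨ a = 4 ∧ b = 1) ∨
      p = 1 ∧ (a = 3 ∧ b = 3 ∨ a = 2 ∧ b = 4 ∨ a = 4 ∧ b = 2) := by decide
  obtain ⟨D, hrel, hblock⟩ : ∃ D : Fin 6 → Fin 6 → Prop,
      (∀ x y, gmRel m x y ↔
        x.1 = y.1 ∧ D x.2 y.2 ∨ y.1 = x.1 + 1 ∧ link (parity x.1) x.2 y.2) ∧
      ∀ a b, block.Adj a b ↔ D a b ∨ D b a := by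
    refine ⟨fun a b ↦ a = 0 ∧ b = 1 ∨ a = 1 ∧ b = 2 ∨ a = 2 ∧ b = 3 ∨ a = 3 ∧ b = 4 ∨
      a = 4 ∧ b = 0 ∨ a = 5 ∧ (b = 0 ∨ b = 1 ∨ b = 2 ∨ b = 3),
      fun x y ↦ or_congr .rfl ?_, by decide⟩
    rw [hlink, (hparity _).1, (hparity _).2, ← and_or_left]
  ext ⟨i, a⟩ ⟨j, b⟩
  simp only [Gm, blockGraph, fromRel_adj, hrel, hblock]
  tauto

theorem add_one_ne_self (he : Even m) (i : ZMod m) : i + 1 ≠ i := by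
  intro h
  simpa [h] using parity_add_one he i

variable [NeZero m]

theorem gm_adj (he : Even m) {x y : ZMod m × Fin 6} : (Gm m).Adj x y ↔
    x.1 = y.1 ∧ block.Adj x.2 y.2 ∨ y.1 = x.1 + 1 ∧ link (parity x.1) x.2 y.2 ∨
      x.1 = y.1 + 1 ∧ link (parity y.1) y.2 x.2 := by
  rw [gm_eq_blockGraph, blockGraph_adj fun i ↦ (add_one_ne_self he i).symm]

theorem gm_adj_of_block_adj (he : Even m) (i : ZMod m) {a b : Fin 6} (h : block.Adj a b) :
    (Gm m).Adj (i, a) (i, b) :=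
  (gm_adj he).mpr (.inl ⟨rfl, h⟩)

theorem gm_adj_of_link (he : Even m) {i : ZMod m} {a b : Fin 6} (h : link (parity i) a b) :
    (Gm m).Adj (i, a) (i + 1, b) :=
  (gm_adj he).mpr (.inr (.inl ⟨rfl, h⟩))

/-- What a reflection of the cycle of blocks with `i ↦ k - i` does inside the blocks, where `q` is
the parity of `k`. -/
def mirror (q : ZMod 2) : Equiv.Perm (Fin 6) :=
  if q = 1 then 1 else Equiv.swap 0 3 * Equiv.swap 1 2

theorem block_adj_mirror : ∀ q a b, block.Adj (mirror q a) (mirror q b) ↔ block.Adj a b := by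
  decide

theorem link_mirror :
    ∀ q p a b, link (q - (p + 1)) (mirror q b) (mirror q a) ↔ link p a b := by
  decide

/-- The automorphism of `G_m` that reverses the cyclic order of the blocks by `i ↦ k - i`. -/
def reflection (he : Even m) (k : ZMod m) : Gm m ≃g Gm m where
  toEquiv := (Equiv.subLeft k).prodCongr (mirror (parity k))
  map_rel_iff' := by
    rintro ⟨i, a⟩ ⟨j, b⟩
    have hlink : ∀ i j a b,
        k - i = k - j + 1 ∧ link (parity (k - j)) (mirror (parity k) b) (mirror (parity k) a) ↔
          j = i + 1 ∧ link (parity i) a b := by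
      intro i j a b
      have hij : k - i = k - j + 1 ↔ j = i + 1 := by grind
      rw [hij]
      refine and_congr_right fun h ↦ ?_
      rw [h, parity_sub he, parity_add_one he, link_mirror]
    simp only [gm_adj he, Equiv.prodCongr_apply, Prod.map, Equiv.subLeft_apply, sub_right_inj,
      block_adj_mirror, hlink]
    tauto

end GmStructure

section LocalBounds

variable {K : Type*} {f g : Fin 6 → Option K} {p : ZMod 2}

/-- The charge of a side of a block on which `n` of the three ports survive; it is odd under
`n ↦ 3 - n` and decreasing. -/
def potential : ℕ → ℤ
  | 0 => 3
  | 1 => 2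
  | 2 => -2
  | _ => -3

theorem neg_three_le_potential (n : ℕ) : -3 ≤ potential n := by
  unfold potential
  split <;> decide

theorem potential_add_potential_nonneg {k n : ℕ} (h : k + n ≤ 3) :
    0 ≤ potential k + potential n := by
  have hk : k ≤ 3 := by omega
  have hn : n ≤ 3 := by omega
  interval_cases k <;> interval_cases n <;> first | decide | omega

/-- The surviving vertices of a block among its ports for parity `p`. -/
def survivingPorts (p : ZMod 2) (f : Fin 6 → Option K) : Finset (Fin 6) :=
  ports p \ uncoloured f

/-- The charge that a coloured block sends through its ports for parity `p`. -/
def charge (p : ZMod 2) (f : Fin 6 → Option K) : ℤ :=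
  potential (survivingPorts p f).card

theorem neg_three_le_charge (p : ZMod 2) (f : Fin 6 → Option K) : -3 ≤ charge p f :=
  neg_three_le_potential _

variable [DecidableEq K]

theorem card_palette_le_two (h : IsComponentColouring block f) : (palette f).card ≤ 2 := by
  have htriple : ∀ x y z : Fin 6, x = y ∨ x = z ∨ y = z ∨
      block.Adj x y ∨ block.Adj x z ∨ block.Adj y z := by decide
  by_contra! hcard
  obtain ⟨a, b, c, ha, hb, hc, hab, hac, hbc⟩ := Finset.two_lt_card_iff.mp hcard
  obtain ⟨x, hx⟩ := mem_palette.mp ha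
  obtain ⟨y, hy⟩ := mem_palette.mp hb
  obtain ⟨z, hz⟩ := mem_palette.mp hc
  rcases htriple x y z with rfl | rfl | rfl | h' | h' | h'
  · exact hab (Option.some_inj.mp (hx.symm.trans hy))
  · exact hac (Option.some_inj.mp (hx.symm.trans hz))
  · exact hbc (Option.some_inj.mp (hy.symm.trans hz))
  · exact hab (h.eq_of_adj h' hx hy)
  · exact hac (h.eq_of_adj h' hx hz)
  · exact hbc (h.eq_of_adj h' hy hz)

theorem exists_bool_injOn_palette (h : IsComponentColouring block f) :
    ∃ e : K → Bool, Set.InjOn e (palette f) := by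
  obtain ⟨e, -, he⟩ := (palette f).finite_toSet.exists_injOn_of_encard_le
    (t := (Set.univ : Set Bool)) (by
      rw [Set.encard_coe_eq_coe_finsetCard, Set.encard_univ, ENat.card_eq_coe_fintype_card]
      exact_mod_cast card_palette_le_two h)
  exact ⟨e, he⟩

theorem block_bound (h : IsComponentColouring block f) :
    6 * (palette f).card + charge 0 f + charge 1 f ≤ 4 * (uncoloured f).card := by
  have hbool : ∀ g : Fin 6 → Option Bool, IsComponentColouring block g →
      6 * (palette g).card + charge 0 g + charge 1 g ≤ 4 * (uncoloured g).card := by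
    decide +kernel
  obtain ⟨e, he⟩ := exists_bool_injOn_palette h
  simpa only [charge, survivingPorts, palette_map, uncoloured_map,
    Finset.card_image_of_injOn he] using hbool _ (h.map e)

theorem two_le_card_uncoloured (h : IsComponentColouring block f) (hf : 2 ≤ (palette f).card) :
    2 ≤ (uncoloured f).card := by
  have := block_bound h
  have := neg_three_le_charge 0 f
  have := neg_three_le_charge 1 f
  omega

theorem exists_mem_ports_of_mem_palette (h : IsComponentColouring block f)
    (hf : 2 ≤ (palette f).card) (hun : (uncoloured f).card ≤ 2) (p : ZMod 2) {c : K}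
    (hc : c ∈ palette f) : ∃ a ∈ ports p, f a = some c := by
  have hbool : ∀ g : Fin 6 → Option Bool, IsComponentColouring block g →
      2 ≤ (palette g).card → (uncoloured g).card ≤ 2 →
        ∀ p, ∀ c ∈ palette g, ∃ a ∈ ports p, g a = some c := by
    decide +kernel
  obtain ⟨e, he⟩ := exists_bool_injOn_palette h
  obtain ⟨a, ha, hac⟩ := hbool _ (h.map e)
    (by rwa [palette_map, Finset.card_image_of_injOn he]) (by rwa [uncoloured_map]) p (e c)
    (by rw [palette_map]; exact Finset.mem_image_of_mem e hc)
  obtain ⟨d, hd, hde⟩ := Option.map_eq_some_iff.mp hac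
  exact ⟨a, ha, hd.trans (congrArg some (he (mem_palette_of_eq_some hd) hc hde))⟩

/-- The colours that run along a link from a coloured block of parity `p` to the next block. -/
def crossing (p : ZMod 2) (f g : Fin 6 → Option K) : Finset K :=
  {c ∈ palette f | ∃ a b, link p a b ∧ f a = some c ∧ g b = some c}

theorem mem_crossing {c : K} :
    c ∈ crossing p f g ↔ ∃ a b, link p a b ∧ f a = some c ∧ g b = some c := by
  simp only [crossing, Finset.mem_filter, mem_palette]
  grind

theorem crossing_subset_left : crossing p f g ⊆ palette f :=
  Finset.filter_subset _ _

theorem crossing_subset_right : crossing p f g ⊆ palette g := by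
  intro c hc
  obtain ⟨a, b, -, -, hb⟩ := mem_crossing.mp hc
  exact mem_palette_of_eq_some hb

theorem link_bound (h : ∀ a b, link p a b → f a = none ∨ g b = none ∨ f a = g b) :
    0 ≤ 6 * ((crossing p f g).card : ℤ) + charge p f + charge p g := by
  rcases (crossing p f g).eq_empty_or_nonempty with hempty | hne
  · have hdisj : Disjoint ((survivingPorts p f).map (partner p).toEmbedding)
        (survivingPorts p g) := by
      rw [Finset.disjoint_left]
      intro b hbf hbg
      obtain ⟨a, ha, rfl⟩ := Finset.mem_map.mp hbf
      simp only [survivingPorts, Finset.mem_sdiff, mem_uncoloured] at ha hbg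
      have hlink : link p a (partner p a) := ⟨ha.1, rfl⟩
      have hfg := ((h _ _ hlink).resolve_left ha.2).resolve_left hbg.2
      obtain ⟨c, hc⟩ := Option.ne_none_iff_exists'.mp ha.2
      have : c ∈ crossing p f g := mem_crossing.mpr ⟨_, _, hlink, hc, hfg ▸ hc⟩
      simp [hempty] at this
    have hports : ∀ p, (ports p).map (partner p).toEmbedding = ports p ∧ (ports p).card = 3 := by
      decide
    have hsub : (survivingPorts p f).map (partner p).toEmbedding ∪ survivingPorts p g ⊆ ports p :=
      Finset.union_subset
        ((Finset.map_subset_map.mpr Finset.sdiff_subset).trans (hports p).1.subset)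
        Finset.sdiff_subset
    have hcard := Finset.card_le_card hsub
    rw [Finset.card_union_of_disjoint hdisj, Finset.card_map, (hports p).2] at hcard
    simpa [hempty, charge] using potential_add_potential_nonneg hcard
  · have := hne.card_pos
    have := neg_three_le_charge p f
    have := neg_three_le_charge p g
    omega

theorem uncoloured_nonempty_of_link (hf : IsComponentColouring block f)
    (hg : IsComponentColouring block g) (hpal : 2 ≤ (palette f).card)
    (hun : (uncoloured f).card ≤ 2)
    (h : ∀ a b, link p a b → f a = none ∨ g b = none ∨ f a = g b) : (uncoloured g).Nonempty := by
  by_contra! hempty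
  have hsub : palette f ⊆ palette g := by
    intro c hc
    obtain ⟨a, ha, hac⟩ := exists_mem_ports_of_mem_palette hf hpal hun p hc
    have hb : g (partner p a) ≠ none := by
      rw [Ne, ← mem_uncoloured, hempty]
      exact Finset.notMem_empty _
    have hfg := (h a _ ⟨ha, rfl⟩).resolve_left (by simp [hac]) |>.resolve_left hb
    exact mem_palette_of_eq_some (hfg ▸ hac)
  have := two_le_card_uncoloured hg (hpal.trans (Finset.card_le_card hsub))
  simp [hempty] at this

end LocalBounds

section GmToughness

variable {m : ℕ} [NeZero m] {K : Type*} {f : ZMod m → Fin 6 → Option K}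

theorem isComponentColouring_block (he : Even m)
    (h : IsComponentColouring (Gm m) (Function.uncurry f)) (i : ZMod m) :
    IsComponentColouring block (f i) :=
  fun a b hab ↦ h (i, a) (i, b) (gm_adj_of_block_adj he i hab)

theorem eq_of_link (he : Even m) (h : IsComponentColouring (Gm m) (Function.uncurry f))
    (i : ZMod m) (a b : Fin 6) (hab : link (parity i) a b) :
    f i a = none ∨ f (i + 1) b = none ∨ f i a = f (i + 1) b :=
  h (i, a) (i + 1, b) (gm_adj_of_link he hab)

variable [DecidableEq K]

theorem three_mul_sum_card_palette_le (he : Even m)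
    (h : IsComponentColouring (Gm m) (Function.uncurry f)) :
    3 * ∑ i, (palette (f i)).card ≤
      2 * ∑ i, (uncoloured (f i)).card + 3 * ∑ i, (crossing (parity i) (f i) (f (i + 1))).card := by
  have hblock : ∀ i, 6 * ((palette (f i)).card : ℤ) + charge (parity i) (f i) +
      charge (parity i + 1) (f i) ≤ 4 * (uncoloured (f i)).card := by
    intro i
    have hsides : ∀ p : ZMod 2, charge p (f i) + charge (p + 1) (f i) =
        charge 0 (f i) + charge 1 (f i) := by
      intro p
      fin_cases p
      · rfl
      · exact add_comm _ _
    linarith [block_bound (isComponentColouring_block he h i), hsides (parity i)]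
  have hlink := fun i ↦ link_bound (eq_of_link he h i)
  have hshift : ∑ i, charge (parity i + 1) (f i) = ∑ i, charge (parity i) (f (i + 1)) := by
    rw [← Equiv.sum_comp (Equiv.addRight 1) fun i ↦ charge (parity i + 1) (f i)]
    refine Finset.sum_congr rfl fun i _ ↦ ?_
    rw [Equiv.coe_addRight, parity_add_one he, add_assoc, CharTwo.add_self_eq_zero, add_zero]
  have hblocks := Finset.sum_le_sum fun i (_ : i ∈ Finset.univ) ↦ hblock i
  have hlinks := Finset.sum_nonneg fun i (_ : i ∈ Finset.univ) ↦ hlink i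
  simp only [Finset.sum_add_distrib, ← Finset.mul_sum] at hblocks hlinks
  zify
  linarith

theorem forall_of_add_one {P : ZMod m → Prop} {i : ZMod m} (hi : P i)
    (hsucc : ∀ j, P j → P (j + 1)) (j : ZMod m) : P j := by
  have hadd : ∀ n : ℕ, P (i + n) := by
    intro n
    induction n with
    | zero => simpa using hi
    | succ n ih => simpa [add_assoc] using hsucc _ ih
  simpa using hadd (j - i).val

theorem two_mul_card_lt_sum_card_uncoloured (he : Even m)
    (h : IsComponentColouring (Gm m) (Function.uncurry f)) {Q : Finset (ZMod m)}
    (hQ : ∀ i, i ∈ Q ↔ 2 ≤ (palette (f i)).card) (hne : Q.Nonempty) (hcard : Q.card < m) :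
    2 * Q.card < ∑ i, (uncoloured (f i)).card := by
  by_contra! hsum
  have hblock := isComponentColouring_block he h
  have hle : ∀ i ∈ Finset.univ, (if i ∈ Q then 2 else 0) ≤ (uncoloured (f i)).card := by
    intro i _
    split_ifs with hi
    · exact two_le_card_uncoloured (hblock i) ((hQ i).mp hi)
    · exact Nat.zero_le _
  have htotal : ∑ i, (if i ∈ Q then 2 else 0) = 2 * Q.card := by
    simp [mul_comm]
  have heq := (Finset.sum_eq_sum_iff_of_le hle).mp
    ((Finset.sum_le_sum hle).antisymm (htotal ▸ hsum))
  obtain ⟨i, hi⟩ := hne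
  have hmem : ∀ j, j ∈ Q := by
    refine forall_of_add_one hi fun j hj ↦ ?_
    have hnext : (uncoloured (f (j + 1))).Nonempty := by
      refine uncoloured_nonempty_of_link (hblock j) (hblock (j + 1)) ((hQ j).mp hj) ?_
        (eq_of_link he h j)
      simp [← heq j (Finset.mem_univ j), hj]
    by_contra hj'
    have hcard := heq (j + 1) (Finset.mem_univ _)
    rw [if_neg hj'] at hcard
    exact hnext.card_pos.ne hcard
  rw [Finset.eq_univ_iff_forall.mpr hmem, Finset.card_univ, ZMod.card] at hcard
  exact lt_irrefl _ hcard

theorem card_filter_mem_crossing_lt (p : ZMod m → ZMod 2) {c : K} {i j : ZMod m}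
    (hi : c ∈ palette (f i)) (hj : c ∉ palette (f j)) :
    (Finset.univ.filter fun i ↦ c ∈ crossing (p i) (f i) (f (i + 1))).card <
      (Finset.univ.filter fun i ↦ c ∈ palette (f i)).card := by
  refine Finset.card_lt_card (Finset.ssubset_iff_subset_ne.mpr ⟨fun k hk ↦ ?_, fun heq ↦ ?_⟩)
  · simp only [Finset.mem_filter, Finset.mem_univ, true_and] at hk ⊢
    exact crossing_subset_left hk
  · refine hj (forall_of_add_one (P := fun k ↦ c ∈ palette (f k)) hi (fun k hk ↦ ?_) j)
    have hcross : k ∈ Finset.univ.filter fun i ↦ c ∈ crossing (p i) (f i) (f (i + 1)) :=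
      (Finset.ext_iff.mp heq k).mpr (Finset.mem_filter.mpr ⟨Finset.mem_univ k, hk⟩)
    exact crossing_subset_right (Finset.mem_filter.mp hcross).2

variable [Fintype K]

theorem sum_card_eq_sum_card_filter_mem {I : Type*} [Fintype I] (s : I → Finset K) :
    ∑ i, (s i).card = ∑ c, (Finset.univ.filter fun i ↦ c ∈ s i).card := by
  simpa [Finset.bipartiteAbove, Finset.bipartiteBelow] using
    Finset.sum_card_bipartiteAbove_eq_sum_card_bipartiteBelow
      (s := Finset.univ) (t := Finset.univ) (fun i c ↦ c ∈ s i)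

theorem card_add_sum_card_crossing_le (p : ZMod m → ZMod 2) (hused : ∀ c, ∃ i, c ∈ palette (f i))
    (hspan : ∀ c, ∃ i, c ∉ palette (f i)) :
    Fintype.card K + ∑ i, (crossing (p i) (f i) (f (i + 1))).card ≤
      ∑ i, (palette (f i)).card := by
  rw [sum_card_eq_sum_card_filter_mem fun i ↦ palette (f i),
    sum_card_eq_sum_card_filter_mem fun i ↦ crossing (p i) (f i) (f (i + 1)),
    Fintype.card_eq_sum_ones, ← Finset.sum_add_distrib]
  refine Finset.sum_le_sum fun c _ ↦ ?_
  obtain ⟨i, hi⟩ := hused c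
  obtain ⟨j, hj⟩ := hspan c
  rw [add_comm]
  exact card_filter_mem_crossing_lt p hi hj

theorem card_le_of_mem_all_palettes {I J : Type*} [Fintype I] [Fintype J] {f : I → J → Option K}
    (hf : ∀ i, (palette (f i)).card ≤ 2) (hused : ∀ c, ∃ i, c ∈ palette (f i)) {c₀ : K}
    (hc₀ : ∀ i, c₀ ∈ palette (f i)) :
    Fintype.card K ≤ (Finset.univ.filter fun i ↦ 2 ≤ (palette (f i)).card).card + 1 := by
  set Q := Finset.univ.filter fun i ↦ 2 ≤ (palette (f i)).card
  have hcover : Finset.univ.erase c₀ ⊆ Q.biUnion fun i ↦ (palette (f i)).erase c₀ := by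
    intro c hc
    obtain ⟨i, hi⟩ := hused c
    have hne := Finset.ne_of_mem_erase hc
    have htwo : 2 ≤ (palette (f i)).card :=
      Finset.one_lt_card.mpr ⟨c, hi, c₀, hc₀ i, hne⟩
    exact Finset.mem_biUnion.mpr ⟨i, by simpa [Q] using htwo, Finset.mem_erase.mpr ⟨hne, hi⟩⟩
  have hcard := (Finset.card_le_card hcover).trans <| Finset.card_biUnion_le_card_mul _ _ 1
    fun i _ ↦ by rw [Finset.card_erase_of_mem (hc₀ i)]; have := hf i; omega
  rw [Finset.card_erase_of_mem (Finset.mem_univ c₀), Finset.card_univ] at hcard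
  omega

theorem three_mul_card_le (hm : 2 < m) (he : Even m)
    (h : IsComponentColouring (Gm m) (Function.uncurry f)) (hused : ∀ c, ∃ i, c ∈ palette (f i))
    (htwo : 2 ≤ Fintype.card K) :
    3 * Fintype.card K ≤ 2 * ∑ i, (uncoloured (f i)).card := by
  have hblock := isComponentColouring_block he h
  by_cases hspan : ∀ c, ∃ i, c ∉ palette (f i)
  · have := three_mul_sum_card_palette_le he h
    have := card_add_sum_card_crossing_le parity hused hspan
    omega
  · push Not at hspan
    obtain ⟨c₀, hc₀⟩ := hspan
    have hcard := card_le_of_mem_all_palettes (fun i ↦ card_palette_le_two (hblock i)) hused hc₀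
    set Q := Finset.univ.filter fun i ↦ 2 ≤ (palette (f i)).card
    have hQ : ∀ i, i ∈ Q ↔ 2 ≤ (palette (f i)).card := by simp [Q]
    by_cases hQcard : Q.card ≤ 2
    · have := two_mul_card_lt_sum_card_uncoloured he h hQ
        (Finset.card_pos.mp (by omega)) (by omega)
      omega
    · have hsum : Q.card * 2 ≤ ∑ i, (uncoloured (f i)).card :=
        (Finset.card_nsmul_le_sum Q _ 2 fun i hi ↦
          two_le_card_uncoloured (hblock i) ((hQ i).mp hi)).trans
        (Finset.sum_le_sum_of_subset Q.subset_univ)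
      omega

theorem gm_isTough (hm : 2 < m) (he : Even m) : IsTough (3 / 2) (Gm m) := by
  classical
  rw [isTough_three_halves_iff]
  intro S hS
  obtain ⟨κ, hκ, hdeleted, hused⟩ := exists_isComponentColouring (Gm m) S
  have : Fintype ((Gm m).induce Sᶜ).ConnectedComponent := Fintype.ofFinite _
  have hcard : numComp (Gm m) S = Fintype.card ((Gm m).induce Sᶜ).ConnectedComponent :=
    Nat.card_eq_fintype_card
  have hncard : S.ncard = ∑ i, (uncoloured fun a ↦ κ (i, a)).card :=
    (congrArg Set.ncard hdeleted.symm).trans <|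
      (ncard_setOf_eq_none κ).trans (card_uncoloured_prod κ)
  rw [hcard, hncard]
  refine three_mul_card_le hm he (f := fun i a ↦ κ (i, a)) hκ (fun c ↦ ?_) (hcard ▸ hS)
  obtain ⟨⟨i, a⟩, hc⟩ := hused c
  exact ⟨i, mem_palette_of_eq_some hc⟩

end GmToughness

section Prototype

variable {I I' J K : Type*}

theorem IsComponentColouring.comp_blocks {H : SimpleGraph (I × J)} {H' : SimpleGraph (I' × J)}
    {w : I' → J → Option K} (h : IsComponentColouring H' (blockColouring w)) (φ : I → I')
    (hadj : ∀ x y, H.Adj x y → H'.Adj (Prod.map φ id x) (Prod.map φ id y))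
    (hinj : ∀ x y, H.Adj x y → φ x.1 = φ y.1 → x.1 = y.1) :
    IsComponentColouring H (blockColouring (w ∘ φ)) := by
  intro x y hxy
  cases hx : w (φ x.1) x.2 with
  | none => left; simp [blockColouring, hx]
  | some c =>
    cases hy : w (φ y.1) y.2 with
    | none => right; left; simp [blockColouring, hy]
    | some d =>
      right; right
      obtain ⟨hkind, rfl⟩ := Prod.mk.inj <| h.eq_of_adj (hadj x y hxy)
        (c := (φ x.1, c)) (d := (φ y.1, d)) (by simp [blockColouring, hx])
        (by simp [blockColouring, hy])
      rw [blockColouring, blockColouring, Function.comp_apply, Function.comp_apply, hx, hy,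
        hinj x y hxy hkind]

/-- The successor relation on the kinds of blocks: along the cycle of blocks one sees the kinds
`0, 1, 2, 3`, followed by alternating kinds `4` and `5`. -/
def follows (k l : Fin 6) : Prop :=
  l ∈ (![{1}, {2}, {3}, {0, 4}, {5}, {0, 4}] : Fin 6 → Finset (Fin 6)) k

instance : DecidableRel follows :=
  fun _ _ ↦ inferInstanceAs (Decidable (_ ∈ _))

theorem not_follows_self : ∀ k, ¬ follows k k := by
  decide

/-- A finite graph onto which every `G_m` folds: the blocks `0, 1, 2, 3` are kept apart, the others
are identified according to their parity. -/
def prototype : SimpleGraph (Fin 6 × Fin 6) :=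
  blockGraph follows fun k ↦ (k : ℕ)

instance : DecidableRel prototype.Adj := by
  unfold prototype blockGraph
  infer_instance

/-- The kind of the `n`-th block. -/
def kind (n : ℕ) : Fin 6 :=
  if n < 4 then Fin.ofNat 6 n else if Even n then 4 else 5

theorem kind_of_even {n : ℕ} (hn : 4 ≤ n) (h : Even n) : kind n = 4 := by
  rw [kind, if_neg hn.not_gt, if_pos h]

theorem kind_of_odd {n : ℕ} (hn : 4 ≤ n) (h : Odd n) : kind n = 5 := by
  rw [kind, if_neg hn.not_gt, if_neg (Nat.not_even_iff_odd.mpr h)]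

theorem kind_cases (n : ℕ) : n < 4 ∨ Even n ∧ kind n = 4 ∨ Odd n ∧ kind n = 5 := by
  rcases lt_or_ge n 4 with hn | hn
  · exact .inl hn
  · exact .inr (n.even_or_odd.imp (fun h ↦ ⟨h, kind_of_even hn h⟩) fun h ↦ ⟨h, kind_of_odd hn h⟩)

theorem natCast_kind (n : ℕ) : ((kind n : ℕ) : ZMod 2) = n := by
  rcases kind_cases n with hn | ⟨h, hk⟩ | ⟨h, hk⟩
  · interval_cases n <;> decide
  · rw [hk, h.natCast_zmod_two]
    decide
  · rw [hk, h.natCast_zmod_two]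
    decide

theorem follows_kind_succ (n : ℕ) : follows (kind n) (kind (n + 1)) := by
  rcases lt_or_ge n 4 with hn | hn
  · interval_cases n <;> decide
  · rcases n.even_or_odd with h | h
    · rw [kind_of_even hn h, kind_of_odd (by omega) h.add_one]
      decide
    · rw [kind_of_odd hn h, kind_of_even (by omega) h.add_one]
      decide

theorem follows_kind_zero {n : ℕ} (hn : Odd n) (h : 2 < n) : follows (kind n) (kind 0) := by
  rcases kind_cases n with hn' | ⟨he, -⟩ | ⟨-, hk⟩
  · interval_cases n
    decide
  · exact absurd hn (Nat.not_odd_iff_even.mpr he)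
  · rw [hk]
    decide

theorem kind_val_eq {n : ℕ} (h : kind n < 4) : (kind n : ℕ) = n := by
  rcases kind_cases n with hn | ⟨-, hk⟩ | ⟨-, hk⟩
  · interval_cases n <;> rfl
  · exact absurd h (by rw [hk]; decide)
  · exact absurd h (by rw [hk]; decide)

theorem sum_range_kind {R : Type*} [CommSemiring R] (g : Fin 6 → R) (k : ℕ) :
    ∑ n ∈ Finset.range (4 + 2 * k), g (kind n) = g 0 + g 1 + g 2 + g 3 + k * (g 4 + g 5) := by
  induction k with
  | zero =>
    simp only [Finset.sum_range_succ, Finset.sum_range_zero, Nat.cast_zero, zero_mul, mul_zero,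
      add_zero, zero_add]
    rfl
  | succ k ih =>
    have heven : Even (4 + 2 * k) := by grind
    rw [show 4 + 2 * (k + 1) = 4 + 2 * k + 1 + 1 by ring, Finset.sum_range_succ,
      Finset.sum_range_succ, ih, kind_of_even (by omega) heven,
      kind_of_odd (by omega) heven.add_one]
    push_cast
    ring

end Prototype

section Folding

variable {m : ℕ} [NeZero m]

theorem sum_zmod_val {M : Type*} [AddCommMonoid M] (g : ℕ → M) :
    ∑ i : ZMod m, g i.val = ∑ n ∈ Finset.range m, g n := by
  cases m with
  | zero => exact absurd rfl (NeZero.ne 0)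
  | succ n => exact Fin.sum_univ_eq_sum_range g (n + 1)

theorem follows_kind_val_add_one (hm : 4 ≤ m) (he : Even m) (i : ZMod m) :
    follows (kind i.val) (kind (i + 1).val) := by
  have : Fact (1 < m) := ⟨by omega⟩
  rw [ZMod.val_add, ZMod.val_one]
  rcases (Nat.succ_le_of_lt i.val_lt).lt_or_eq with hlt | heq
  · rw [Nat.mod_eq_of_lt hlt]
    exact follows_kind_succ _
  · rw [show i.val + 1 = m from heq, Nat.mod_self]
    exact follows_kind_zero (by grind) (by omega)

theorem prototype_adj_of_gm_adj (hm : 4 ≤ m) (he : Even m) {x y : ZMod m × Fin 6}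
    (h : (Gm m).Adj x y) :
    prototype.Adj (kind x.1.val, x.2) (kind y.1.val, y.2) ∧
      (kind x.1.val = kind y.1.val → x.1 = y.1) := by
  have hpar : ∀ i : ZMod m, parity i = ((kind i.val : ℕ) : ZMod 2) := fun i ↦ by
    rw [natCast_kind, parity_eq_natCast_val]
  simp only [prototype, blockGraph_adj not_follows_self]
  rw [gm_adj he, hpar, hpar] at h
  rcases h with ⟨h, hab⟩ | ⟨h, hab⟩ | ⟨h, hab⟩
  · exact ⟨.inl ⟨by rw [h], hab⟩, fun _ ↦ h⟩
  · have hf := h ▸ follows_kind_val_add_one hm he x.1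
    exact ⟨.inr (.inl ⟨hf, hab⟩), fun hk ↦ absurd (hk ▸ hf) (not_follows_self _)⟩
  · have hf := h ▸ follows_kind_val_add_one hm he y.1
    exact ⟨.inr (.inr ⟨hf, hab⟩), fun hk ↦ absurd (hk ▸ hf) (not_follows_self _)⟩

end Folding

section Minimality

/-- A partial colouring `w` of `prototype - e` which, pulled back along the folding of `G_m`, shows
that removing the edge above `e` destroys `3 / 2`-toughness: the blocks of kinds `0, 1, 2, 3` have a
negative total excess, and the pairs of blocks of kinds `4` and `5` contribute nothing. -/
structure IsCertificate {K : Type*} [DecidableEq K] (w : Fin 6 → Fin 6 → Option K)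
    (e : Sym2 (Fin 6 × Fin 6)) : Prop where
  isComponentColouring : IsComponentColouring (prototype.deleteEdges {e}) (blockColouring w)
  two_le_card_palette : 2 ≤ (palette (w 0)).card
  excess_neg : excess (w 0) + excess (w 1) + excess (w 2) + excess (w 3) < 0
  excess_eq_zero : excess (w 4) + excess (w 5) = 0

/-- Survivors `0` and `3`, in different components: a block of excess `2`. -/
def sparse : Fin 6 → Option (Fin 6) :=
  ![some 0, none, none, some 3, none, none]

/-- Survivors `1, 2, 5` and `4`, in different components: a block of excess `-2`. -/
def dense : Fin 6 → Option (Fin 6) :=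
  ![none, some 1, some 1, none, some 4, some 1]

/-- The edges of `block` up to `mirror 0`, each written as an ordered pair. -/
def blockRepresentatives : Finset (Fin 6 × Fin 6) :=
  {(0, 1), (1, 2), (4, 0), (5, 0), (5, 1)}

/-- The links of parity `0` up to exchanging the two blocks. -/
def linkRepresentatives : Finset (Fin 6 × Fin 6) :=
  {(0, 0), (1, 4)}

-- Found by a computer search; every colour is named after a vertex in its class.
theorem exists_isCertificate_of_block_edge :
    ∀ e ∈ blockRepresentatives,
      ∃ w : Fin 6 → Fin 6 → Option (Fin 6), IsCertificate w s((0, e.1), (0, e.2)) := by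
  simp only [blockRepresentatives, Finset.forall_mem_insert, Finset.mem_singleton, forall_eq]
  refine ⟨⟨![![some 0, some 1, none, some 3, none, none],
      ![none, some 1, some 1, none, none, some 1],
      ![some 0, none, some 2, some 2, none, none], dense, sparse, dense], ?_⟩,
    ⟨![![none, some 1, some 2, none, some 4, none], sparse, dense, sparse, dense, sparse], ?_⟩,
    ⟨![![some 0, none, some 2, none, some 4, none], ![none, none, some 2, none, some 4, some 2],
      ![none, some 1, none, some 3, none, none], ![some 0, some 0, none, some 3, none, none],
      dense, sparse], ?_⟩,
    ⟨![![some 0, none, none, some 3, none, some 3], dense, sparse, dense, sparse, dense], ?_⟩,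
    ⟨![![none, some 1, none, none, some 4, some 5], sparse, dense, sparse, dense, sparse], ?_⟩⟩
  all_goals constructor <;> decide +kernel

theorem exists_isCertificate_of_link :
    ∀ e ∈ linkRepresentatives,
      ∃ w : Fin 6 → Fin 6 → Option (Fin 6), IsCertificate w s((0, e.1), (1, e.2)) := by
  simp only [linkRepresentatives, Finset.forall_mem_insert, Finset.mem_singleton, forall_eq]
  refine ⟨⟨![![some 0, some 0, none, some 3, none, none],
      ![some 0, some 0, some 0, none, none, some 0],
      ![some 0, none, some 2, some 2, none, none], dense, sparse, dense], ?_⟩,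
    ⟨![![some 0, some 0, none, some 3, none, none], dense, sparse, dense, sparse, dense], ?_⟩⟩
  all_goals constructor <;> decide +kernel

variable {m : ℕ} [NeZero m]

theorem IsCertificate.not_isTough {K : Type*} [DecidableEq K] {w : Fin 6 → Fin 6 → Option K}
    {u v : Fin 6 × Fin 6} (hw : IsCertificate w s(u, v)) (hm : 4 ≤ m) (he : Even m)
    (hu : u.1 < 4) (hv : v.1 < 4) :
    ¬ IsTough (3 / 2)
      ((Gm m).deleteEdges {s((((u.1 : ℕ) : ZMod m), u.2), (((v.1 : ℕ) : ZMod m), v.2))}) := by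
  have hfibre : ∀ (u : Fin 6 × Fin 6) (x : ZMod m × Fin 6), u.1 < 4 →
      (kind x.1.val, x.2) = u → x = (((u.1 : ℕ) : ZMod m), u.2) := by
    rintro _ x hu rfl
    simp [kind_val_eq hu]
  have hcolouring := hw.isComponentColouring.comp_blocks (fun i : ZMod m ↦ kind i.val)
    (H := (Gm m).deleteEdges {s((((u.1 : ℕ) : ZMod m), u.2), (((v.1 : ℕ) : ZMod m), v.2))})
    (fun x y hxy ↦ ?_) fun x y hxy ↦ (prototype_adj_of_gm_adj hm he hxy.1).2
  · refine hcolouring.not_isTough_three_halves (i := 0) ?_ ?_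
    · obtain ⟨k, rfl⟩ : ∃ k, m = 4 + 2 * k := by
        obtain ⟨n, rfl⟩ := he
        exact ⟨n - 2, by omega⟩
      calc ∑ i : ZMod (4 + 2 * k), excess (w (kind i.val))
          = ∑ n ∈ Finset.range (4 + 2 * k), excess (w (kind n)) :=
            sum_zmod_val fun n ↦ excess (w (kind n))
        _ = excess (w 0) + excess (w 1) + excess (w 2) + excess (w 3) +
              k * (excess (w 4) + excess (w 5)) := sum_range_kind (fun l ↦ excess (w l)) k
        _ < 0 := by simpa only [hw.excess_eq_zero, mul_zero, add_zero] using hw.excess_neg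
    · rw [Function.comp_apply, ZMod.val_zero]
      exact hw.two_le_card_palette
  · rw [deleteEdges_adj, Set.mem_singleton_iff, Sym2.eq_iff] at hxy ⊢
    refine ⟨(prototype_adj_of_gm_adj hm he hxy.1).1, fun h ↦ hxy.2 ?_⟩
    exact h.imp (fun h ↦ ⟨hfibre u x hu h.1, hfibre v y hv h.2⟩)
      fun h ↦ ⟨hfibre v x hv h.1, hfibre u y hu h.2⟩

theorem isTough_deleteEdges_reflection_iff (he : Even m) (k i j : ZMod m) (a b : Fin 6) {t : ℝ} :
    IsTough t ((Gm m).deleteEdges {s((i, a), (j, b))}) ↔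
      IsTough t ((Gm m).deleteEdges
        {s((k - i, mirror (parity k) a), (k - j, mirror (parity k) b))}) :=
  isTough_deleteEdges_iff (reflection he k) s((i, a), (j, b))

theorem not_isTough_deleteEdges_block_zero (hm : 4 ≤ m) (he : Even m) {a b : Fin 6}
    (hab : block.Adj a b) :
    ¬ IsTough (3 / 2) ((Gm m).deleteEdges {s(((0 : ZMod m), a), (0, b))}) := by
  have hrep : ∀ a b, (a, b) ∈ blockRepresentatives →
      ¬ IsTough (3 / 2) ((Gm m).deleteEdges {s(((0 : ZMod m), a), (0, b))}) := by
    intro a b h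
    obtain ⟨w, hw⟩ := exists_isCertificate_of_block_edge _ h
    simpa using hw.not_isTough hm he (by simp) (by simp)
  have horbit : ∀ a b, block.Adj a b →
      (a, b) ∈ blockRepresentatives ∨ (b, a) ∈ blockRepresentatives ∨
        (mirror 0 a, mirror 0 b) ∈ blockRepresentatives ∨
          (mirror 0 b, mirror 0 a) ∈ blockRepresentatives := by decide
  have hreflect := isTough_deleteEdges_reflection_iff (t := 3 / 2) he 0 0 0 a b
  rw [sub_zero, parity, ZMod.cast_zero] at hreflect
  rcases horbit a b hab with h | h | h | h
  · exact hrep a b h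
  · rw [Sym2.eq_swap]
    exact hrep b a h
  · rw [hreflect]
    exact hrep _ _ h
  · rw [hreflect, Sym2.eq_swap]
    exact hrep _ _ h

theorem not_isTough_deleteEdges_block (hm : 4 ≤ m) (he : Even m) (i : ZMod m) {a b : Fin 6}
    (hab : block.Adj a b) : ¬ IsTough (3 / 2) ((Gm m).deleteEdges {s((i, a), (i, b))}) := by
  rw [isTough_deleteEdges_reflection_iff he i, sub_self]
  exact not_isTough_deleteEdges_block_zero hm he ((block_adj_mirror _ _ _).mpr hab)

theorem not_isTough_deleteEdges_link_zero (hm : 4 ≤ m) (he : Even m) {a b : Fin 6}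
    (hab : link 0 a b) :
    ¬ IsTough (3 / 2) ((Gm m).deleteEdges {s(((0 : ZMod m), a), (1, b))}) := by
  have hrep : ∀ a b, (a, b) ∈ linkRepresentatives →
      ¬ IsTough (3 / 2) ((Gm m).deleteEdges {s(((0 : ZMod m), a), (1, b))}) := by
    intro a b h
    obtain ⟨w, hw⟩ := exists_isCertificate_of_link _ h
    simpa using hw.not_isTough hm he (by simp) (show (1 : Fin 6) < 4 by decide)
  have horbit : ∀ a b, link 0 a b →
      (a, b) ∈ linkRepresentatives ∨ (mirror 1 b, mirror 1 a) ∈ linkRepresentatives := by decide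
  rcases horbit a b hab with h | h
  · exact hrep a b h
  · rw [isTough_deleteEdges_reflection_iff he 1, sub_zero, sub_self, Sym2.eq_swap, parity,
      ZMod.cast_one he.two_dvd]
    exact hrep _ _ h

theorem not_isTough_deleteEdges_link (hm : 4 ≤ m) (he : Even m) (i : ZMod m) {a b : Fin 6}
    (hab : link (parity i) a b) :
    ¬ IsTough (3 / 2) ((Gm m).deleteEdges {s((i, a), (i + 1, b))}) := by
  rw [isTough_deleteEdges_reflection_iff he (i + 1), sub_self, add_sub_cancel_left, Sym2.eq_swap]
  apply not_isTough_deleteEdges_link_zero hm he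
  have h := (link_mirror (parity (i + 1)) _ _ _).mpr hab
  rwa [← parity_add_one he, sub_self] at h

theorem gm_not_isTough_deleteEdges (hm : 4 ≤ m) (he : Even m) {e : Sym2 (ZMod m × Fin 6)}
    (h : e ∈ (Gm m).edgeSet) : ¬ IsTough (3 / 2) ((Gm m).deleteEdges {e}) := by
  induction e with | _ x y
  obtain ⟨i, a⟩ := x
  obtain ⟨j, b⟩ := y
  simp only [mem_edgeSet, gm_adj he] at h
  rcases h with ⟨rfl, hab⟩ | ⟨rfl, hab⟩ | ⟨rfl, hab⟩
  · exact not_isTough_deleteEdges_block hm he i hab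
  · exact not_isTough_deleteEdges_link hm he i hab
  · rw [Sym2.eq_swap]
    exact not_isTough_deleteEdges_link hm he j hab

end Minimality

end GmTough

/-- for every even `m ≥ 4`, the graph `G_m` is minimally
3/2-tough: it is 3/2-tough, and for every edge `e` there is a vertex set `S`
with `ω((G_m − e) − S) ≥ 2` and `2|S| < 3·ω((G_m − e) − S)`. -/
theorem Gm_minimally_three_halves_tough (m : ℕ) (hm4 : 4 ≤ m) (hme : Even m) :
    (∀ S : Set (ZMod m × Fin 6), 2 ≤ numComp (Gm m) S →
      3 * numComp (Gm m) S ≤ 2 * S.ncard) ∧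
    (∀ e ∈ (Gm m).edgeSet, ∃ S : Set (ZMod m × Fin 6),
      2 ≤ numComp ((Gm m).deleteEdges {e}) S ∧
      2 * S.ncard < 3 * numComp ((Gm m).deleteEdges {e}) S) := by
  have : NeZero m := ⟨by omega⟩
  refine ⟨GmTough.isTough_three_halves_iff.mp (GmTough.gm_isTough (by omega) hme), fun e he ↦ ?_⟩
  have h := GmTough.gm_not_isTough_deleteEdges hm4 hme he
  rw [GmTough.isTough_three_halves_iff] at h
  push Not at h
  exact h
end

section
/- There exists a finite simple graph G on 12 vertices that is 7-regular and minimally 3-tough. -/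
open SimpleGraph

/-- `G` is `t`-tough: whenever deleting `S` leaves at least two components,
`|S| ≥ t · ω(G − S)`. -/
def Tough {V : Type*} (t : ℝ) (G : SimpleGraph V) : Prop :=
  ∀ S : Set V, 2 ≤ numComp G S → t * (numComp G S : ℝ) ≤ (S.ncard : ℝ)

/-- `G` is minimally `t`-tough: `G` is `t`-tough and deleting any edge destroys
`t`-toughness. -/
def MinTough {V : Type*} (t : ℝ) (G : SimpleGraph V) : Prop :=
  Tough t G ∧ ∀ e ∈ G.edgeSet, ¬ Tough t (G.deleteEdges {e})

/-!
Write the witness as `Hᶜ`. Vertices in distinct components of `Hᶜ - S` are adjacent in `H`. So if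
`H` is diamond-free, then `Hᶜ - S` has three components only when it consists of three isolated
vertices; and if moreover `H` has maximum degree at most `d ≥ 3` and distinct vertices have at most
two common neighbors, then `Hᶜ - S` has two components only on at most `d + 1` vertices.
Conversely, a diamond in `H` is a set of four vertices on which `Hᶜ` has three components, which
violates `t`-toughness once there are fewer than `3t + 4` vertices. Deleting an edge of `Hᶜ` adds
one to `H`, so `Hᶜ` is minimally tough when `H` is diamond-saturated.

A `4`-regular such `H` on twelve vertices lives on the ordered pairs of distinct elements of a
four-element set: the pairs with a given first entry form a triangle, and pairs on complementary
two-element sets span four-cycles.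
-/

/-- Diamond-freeness: no two triangles of `G` share an edge. -/
def IsDiamondFree {V : Type*} (G : SimpleGraph V) : Prop :=
  ∀ ⦃u v⦄, G.Adj u v → (G.commonNeighbors u v).Subsingleton

/-- Diamond-saturation: `G` is edge-maximal among the diamond-free graphs on its vertex set. -/
def IsDiamondSaturated {V : Type*} (G : SimpleGraph V) : Prop :=
  IsDiamondFree G ∧ ∀ ⦃u v⦄, u ≠ v → ¬ G.Adj u v → ¬ IsDiamondFree (G ⊔ edge u v)

section

variable {V : Type*} {H : SimpleGraph V}

theorem adj_of_connectedComponentMk_compl_ne {T : Set V} {x y : T}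
    (h : (Hᶜ.induce T).connectedComponentMk x ≠ (Hᶜ.induce T).connectedComponentMk y) :
    H.Adj x y := by
  by_contra hxy
  have hne : (x : V) ≠ y := fun e => h (congrArg _ (Subtype.ext e))
  exact h (ConnectedComponent.connectedComponentMk_eq_of_adj ⟨hne, hxy⟩)

theorem exists_isCompleteBetween_of_nontrivial_connectedComponent {T : Set V}
    [Nontrivial (Hᶜ.induce T).ConnectedComponent] :
    ∃ A B : Set V, A.Nonempty ∧ B.Nonempty ∧ A ∪ B = T ∧ H.IsCompleteBetween A B := by
  let comp := (Hᶜ.induce T).connectedComponentMk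
  obtain ⟨c, c', hne⟩ := exists_pair_ne (Hᶜ.induce T).ConnectedComponent
  obtain ⟨x, rfl⟩ := c.exists_rep
  obtain ⟨y, rfl⟩ := c'.exists_rep
  refine ⟨(↑) '' {z : T | comp z = comp x}, (↑) '' {z : T | comp z ≠ comp x},
    ⟨x, x, rfl, rfl⟩, ⟨y, y, hne.symm, rfl⟩, ?_, ?_⟩
  · have hunion : {z : T | comp z = comp x} ∪ {z | comp z ≠ comp x} = Set.univ :=
      Set.eq_univ_of_forall fun z => em (comp z = comp x)
    rw [← Set.image_union, hunion, Set.image_univ, Subtype.range_coe]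
  · rintro _ ⟨a, ha, rfl⟩ _ ⟨b, hb, rfl⟩
    exact adj_of_connectedComponentMk_compl_ne fun hab => hb (hab.symm.trans ha)

theorem ncard_add_ncard_le_of_isCompleteBetween [Finite V] {d : ℕ} (hd : 3 ≤ d)
    (hdeg : ∀ v, ndeg H v ≤ d) (hco : ∀ u v, u ≠ v → (H.commonNeighbors u v).ncard ≤ 2)
    {A B : Set V} (hA : A.Nonempty) (hB : B.Nonempty) (hAB : H.IsCompleteBetween A B) :
    A.ncard + B.ncard ≤ d + 1 := by
  have ncard_le_degree {A B : Set V} (hB : B.Nonempty) (hAB : H.IsCompleteBetween A B) :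
      A.ncard ≤ d := by
    obtain ⟨b, hb⟩ := hB
    exact (Set.ncard_le_ncard fun a ha => (hAB ha hb).symm).trans (hdeg b)
  have ncard_le_two {A B : Set V} (hB : 1 < B.ncard) (hAB : H.IsCompleteBetween A B) :
      A.ncard ≤ 2 := by
    obtain ⟨b, c, hb, hc, hbc⟩ := (Set.one_lt_ncard_iff).1 hB
    have hsubset : A ⊆ H.commonNeighbors b c := fun a ha => ⟨(hAB ha hb).symm, (hAB ha hc).symm⟩
    exact (Set.ncard_le_ncard hsubset).trans (hco b c hbc)
  have hA_le := ncard_le_degree hB hAB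
  have hB_le := ncard_le_degree hA hAB.symm
  rcases le_or_gt A.ncard 1 with hA1 | hA1
  · omega
  rcases le_or_gt B.ncard 1 with hB1 | hB1
  · omega
  have hA2 := ncard_le_two hB1 hAB
  have hB2 := ncard_le_two hA1 hAB.symm
  omega

theorem numComp_le_ncard_compl [Finite V] (G : SimpleGraph V) (S : Set V) :
    numComp G S ≤ Sᶜ.ncard :=
  Nat.card_le_card_of_surjective (G.induce Sᶜ).connectedComponentMk fun c => c.exists_rep

theorem IsDiamondFree.ncard_compl_le_three (hH : IsDiamondFree H) {S : Set V}
    (hS : 3 ≤ numComp Hᶜ S) : Sᶜ.ncard ≤ 3 := by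
  classical
  have : Finite (Hᶜ.induce Sᶜ).ConnectedComponent :=
    Nat.finite_of_card_ne_zero (show numComp Hᶜ S ≠ 0 by omega)
  let comp := (Hᶜ.induce Sᶜ).connectedComponentMk
  obtain ⟨ca, cb, cc, -, -, -, hab, hac, hbc⟩ := (Set.two_lt_ncard_iff).1
    (hS.trans_eq (Set.ncard_univ (Hᶜ.induce Sᶜ).ConnectedComponent).symm)
  obtain ⟨a, rfl⟩ := ca.exists_rep
  obtain ⟨b, rfl⟩ := cb.exists_rep
  obtain ⟨c, rfl⟩ := cc.exists_rep
  -- Vertices in distinct components of `Hᶜ - S` are adjacent in `H`, so two vertices that each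
  -- miss the components of both `x` and `y` are common neighbors of `x` and `y`.
  have eq_of_missing_two {x y z w : (Sᶜ : Set V)} (hxy : comp x ≠ comp y)
      (hxz : comp x ≠ comp z) (hyz : comp y ≠ comp z) (hxw : comp x ≠ comp w)
      (hyw : comp y ≠ comp w) : (w : V) = z :=
    hH (adj_of_connectedComponentMk_compl_ne hxy)
      ⟨adj_of_connectedComponentMk_compl_ne hxw, adj_of_connectedComponentMk_compl_ne hyw⟩
      ⟨adj_of_connectedComponentMk_compl_ne hxz, adj_of_connectedComponentMk_compl_ne hyz⟩
  have hsubset : Sᶜ ⊆ (({↑a, ↑b, ↑c} : Finset V) : Set V) := by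
    intro w hw
    suffices w = a ∨ w = b ∨ w = c by simpa using this
    by_cases ha : comp a = comp ⟨w, hw⟩
    · exact Or.inl <| eq_of_missing_two hbc hab.symm hac.symm
        (fun h => hab (ha.trans h.symm)) (fun h => hac (ha.trans h.symm))
    by_cases hb : comp b = comp ⟨w, hw⟩
    · exact Or.inr <| Or.inl <| eq_of_missing_two hac hab hbc.symm
        ha (fun h => hbc (hb.trans h.symm))
    · exact Or.inr <| Or.inr <| eq_of_missing_two hab hac hbc ha hb
  exact (Set.ncard_le_ncard hsubset).trans ((Set.ncard_coe_finset _).trans_le Finset.card_le_three)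

theorem IsDiamondFree.tough_compl [Finite V] (hH : IsDiamondFree H) {d : ℕ} (hd : 3 ≤ d)
    (hdeg : ∀ v, ndeg H v ≤ d) (hco : ∀ u v, u ≠ v → (H.commonNeighbors u v).ncard ≤ 2) {t : ℝ}
    (ht_deg : 2 * t + (d + 1) ≤ Nat.card V) (ht : 3 * t + 3 ≤ Nat.card V) : Tough t Hᶜ := by
  intro S hS
  have hsum : (S.ncard : ℝ) + Sᶜ.ncard = Nat.card V := mod_cast Set.ncard_add_ncard_compl S
  rcases hS.eq_or_lt with htwo | hthree
  · have : Nontrivial (Hᶜ.induce Sᶜ).ConnectedComponent :=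
      Finite.one_lt_card_iff_nontrivial.1 hS
    obtain ⟨A, B, hA, hB, hAB, hcomplete⟩ :=
      exists_isCompleteBetween_of_nontrivial_connectedComponent (H := H) (T := Sᶜ)
    have hcard : (Sᶜ.ncard : ℝ) ≤ d + 1 := mod_cast hAB ▸ (Set.ncard_union_le A B).trans
      (ncard_add_ncard_le_of_isCompleteBetween hd hdeg hco hA hB hcomplete)
    rw [← htwo]
    push_cast
    linarith
  · have hcard := hH.ncard_compl_le_three hthree
    have heq : numComp Hᶜ S = 3 := (numComp_le_ncard_compl _ S |>.trans hcard).antisymm hthree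
    have hcard' : (Sᶜ.ncard : ℝ) ≤ 3 := mod_cast hcard
    rw [heq]
    push_cast
    linarith

theorem connectedComponentMk_ne_of_isIsolated {G : SimpleGraph V} {u v : V}
    (hu : G.IsIsolated u) (huv : u ≠ v) : G.connectedComponentMk u ≠ G.connectedComponentMk v := by
  rw [Ne, ConnectedComponent.eq]
  rintro ⟨_ | ⟨hadj, _⟩⟩
  exacts [huv rfl, hu _ hadj]

-- In the complement of a diamond, both ends of the edge shared by its two triangles are isolated.
theorem exists_three_le_numComp_compl_of_not_isDiamondFree [Finite V] (hH : ¬ IsDiamondFree H) :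
    ∃ S : Set V, S.ncard + 4 = Nat.card V ∧ 3 ≤ numComp Hᶜ S := by
  classical
  simp only [IsDiamondFree, Set.Subsingleton] at hH
  push Not at hH
  obtain ⟨u, v, huv, x, ⟨hux, hvx⟩, y, ⟨huy, hvy⟩, hxy⟩ := hH
  rw [mem_neighborSet] at hux hvx huy hvy
  let T : Set V := {u, v, x, y}
  have hT : T.ncard = 4 := by
    rw [Set.ncard_eq_toFinset_card']
    simp [T, huv.ne, hux.ne, huy.ne, hvx.ne, hvy.ne, hxy]
  refine ⟨Tᶜ, by rw [← hT, add_comm, Set.ncard_add_ncard_compl], ?_⟩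
  rw [numComp, compl_compl]
  let G := Hᶜ.induce T
  let u' : T := ⟨u, by simp [T]⟩
  let v' : T := ⟨v, by simp [T]⟩
  let x' : T := ⟨x, by simp [T]⟩
  have hu : G.IsIsolated u' := by
    rintro ⟨w, rfl | rfl | rfl | rfl⟩ ⟨hne, hadj⟩
    exacts [hne rfl, hadj huv, hadj hux, hadj huy]
  have hv : G.IsIsolated v' := by
    rintro ⟨w, rfl | rfl | rfl | rfl⟩ ⟨hne, hadj⟩
    exacts [hadj huv.symm, hne rfl, hadj hvx, hadj hvy]
  rw [← Set.ncard_univ]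
  refine (Set.two_lt_ncard_iff).2 ⟨G.connectedComponentMk u', G.connectedComponentMk v',
    G.connectedComponentMk x', trivial, trivial, trivial,
    connectedComponentMk_ne_of_isIsolated hu ?_, connectedComponentMk_ne_of_isIsolated hu ?_,
    connectedComponentMk_ne_of_isIsolated hv ?_⟩
  exacts [Subtype.coe_ne_coe.1 huv.ne, Subtype.coe_ne_coe.1 hux.ne, Subtype.coe_ne_coe.1 hvx.ne]

theorem not_tough_compl_of_not_isDiamondFree [Finite V] (hH : ¬ IsDiamondFree H) {t : ℝ}
    (ht : Nat.card V < 3 * t + 4) : ¬ Tough t Hᶜ := by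
  intro htough
  obtain ⟨S, hcard, hcomp⟩ := exists_three_le_numComp_compl_of_not_isDiamondFree hH
  have hle := htough S (by omega)
  have hcard' : (S.ncard : ℝ) + 4 = Nat.card V := mod_cast hcard
  have hcomp' : (3 : ℝ) ≤ numComp Hᶜ S := mod_cast hcomp
  have hpos : 0 < t := by linarith [(S.ncard.cast_nonneg : (0 : ℝ) ≤ S.ncard)]
  have hmul := mul_le_mul_of_nonneg_left hcomp' hpos.le
  linarith

theorem compl_deleteEdges_singleton (u v : V) :
    Hᶜ.deleteEdges {s(u, v)} = (H ⊔ edge u v)ᶜ := by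
  ext x y
  simp only [deleteEdges_adj, compl_adj, sup_adj, edge_adj, Set.mem_singleton_iff, Sym2.eq_iff]
  tauto

theorem IsDiamondSaturated.minTough_compl [Finite V] (hH : IsDiamondSaturated H) {d : ℕ}
    (hd : 3 ≤ d) (hdeg : ∀ v, ndeg H v ≤ d)
    (hco : ∀ u v, u ≠ v → (H.commonNeighbors u v).ncard ≤ 2) {t : ℝ}
    (ht_deg : 2 * t + (d + 1) ≤ Nat.card V) (ht : 3 * t + 3 ≤ Nat.card V)
    (ht_lt : Nat.card V < 3 * t + 4) : MinTough t Hᶜ := by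
  refine ⟨hH.1.tough_compl hd hdeg hco ht_deg ht, Sym2.ind fun u v huv => ?_⟩
  obtain ⟨hne, hnadj⟩ := huv
  rw [compl_deleteEdges_singleton]
  exact not_tough_compl_of_not_isDiamondFree (hH.2 hne hnadj) ht_lt

-- The new edge closes the triangle `u v r`; a second triangle then stands on `uv`, `ur` or `vr`.
theorem not_isDiamondFree_sup_edge {u v : V} (huv : u ≠ v) (hnadj : ¬ H.Adj u v)
    (h : (H.commonNeighbors u v).Nontrivial ∨ ∃ r ∈ H.commonNeighbors u v,
      (H.commonNeighbors u r).Nonempty ∨ (H.commonNeighbors v r).Nonempty) :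
    ¬ IsDiamondFree (H ⊔ edge u v) := by
  intro hfree
  have huv' : (H ⊔ edge u v).Adj u v := Or.inr ((edge_adj ..).2 ⟨Or.inl ⟨rfl, rfl⟩, huv⟩)
  have hle (x y) : H.commonNeighbors x y ⊆ (H ⊔ edge u v).commonNeighbors x y :=
    fun _ hz => ⟨Or.inl hz.1, Or.inl hz.2⟩
  rcases h with ⟨r, hr, s, hs, hrs⟩ | ⟨r, ⟨hur, hvr⟩, ⟨s, hs⟩ | ⟨s, hs⟩⟩
  · exact hrs (hfree huv' (hle _ _ hr) (hle _ _ hs))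
  · have hsv : s = v := hfree (Or.inl hur) (hle _ _ hs) ⟨huv', Or.inl hvr.symm⟩
    exact hnadj (hsv ▸ hs.1)
  · have hsu : s = u := hfree (Or.inl hvr) (hle _ _ hs) ⟨huv'.symm, Or.inl hur.symm⟩
    exact hnadj (hsu ▸ hs.1.symm)

theorem ndeg_eq_degree (G : SimpleGraph V) (v : V) [Fintype (G.neighborSet v)] :
    ndeg G v = G.degree v := by
  rw [ndeg, Set.ncard_eq_toFinset_card', Set.toFinset_card, card_neighborSet_eq_degree]

end

/-- The vertices of `arcGraph`: the twelve ordered pairs of distinct elements of `Fin 4`. -/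
abbrev Arc : Type := {p : Fin 4 × Fin 4 // p.1 ≠ p.2}

/-- The graph whose complement is the witness: two arcs are adjacent when they are distinct with
the same tail, or have no endpoint in common. -/
def arcGraph : SimpleGraph Arc where
  Adj p q := p ≠ q ∧ (p.1.1 = q.1.1 ∨ Disjoint ({p.1.1, p.1.2} : Finset (Fin 4)) {q.1.1, q.1.2})
  symm := ⟨fun _ _ h => ⟨h.1.symm, h.2.imp Eq.symm fun hd => hd.symm⟩⟩
  loopless := ⟨fun _ h => h.1 rfl⟩

namespace arcGraph

instance : DecidableRel arcGraph.Adj := fun p q =>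
  inferInstanceAs (Decidable (p ≠ q ∧ (p.1.1 = q.1.1 ∨
    Disjoint ({p.1.1, p.1.2} : Finset (Fin 4)) {q.1.1, q.1.2})))

theorem card_arc : Fintype.card Arc = 12 := by decide

theorem degree_eq_four : ∀ p, arcGraph.degree p = 4 := by decide +kernel

theorem ncard_commonNeighbors_le_two (p q : Arc) (hpq : p ≠ q) :
    (arcGraph.commonNeighbors p q).ncard ≤ 2 := by
  rw [Set.ncard_eq_toFinset_card']
  revert p q
  decide +kernel

theorem isDiamondFree : IsDiamondFree arcGraph := by
  unfold IsDiamondFree Set.Subsingleton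
  decide +kernel

theorem nontrivial_commonNeighbors_or_exists_triangle : ∀ p q, p ≠ q → ¬ arcGraph.Adj p q →
    (arcGraph.commonNeighbors p q).Nontrivial ∨ ∃ r ∈ arcGraph.commonNeighbors p q,
      (arcGraph.commonNeighbors p r).Nonempty ∨ (arcGraph.commonNeighbors q r).Nonempty := by
  unfold Set.Nontrivial Set.Nonempty
  decide +kernel

theorem isDiamondSaturated : IsDiamondSaturated arcGraph :=
  ⟨isDiamondFree, fun p q hpq hnadj => not_isDiamondFree_sup_edge hpq hnadj
    (nontrivial_commonNeighbors_or_exists_triangle p q hpq hnadj)⟩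

end arcGraph

/-- there exists a finite simple graph on 12 vertices that is
7-regular and minimally 3-tough. -/
theorem exists_seven_regular_minimally_three_tough_on_twelve_vertices :
    ∃ (V : Type) (_ : Fintype V) (G : SimpleGraph V),
      Fintype.card V = 12 ∧
      (∀ v : V, ndeg G v = 7) ∧
      MinTough (3 : ℝ) G := by
  refine ⟨Arc, inferInstance, arcGraphᶜ, arcGraph.card_arc, fun p => ?_, ?_⟩
  · rw [ndeg_eq_degree, degree_compl, arcGraph.card_arc, arcGraph.degree_eq_four]
  · have hcard : Nat.card Arc = 12 := Nat.card_eq_fintype_card.trans arcGraph.card_arc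
    refine arcGraph.isDiamondSaturated.minTough_compl (d := 4) (by norm_num) (fun p => ?_)
      arcGraph.ncard_commonNeighbors_le_two ?_ ?_ ?_
    · rw [ndeg_eq_degree, arcGraph.degree_eq_four]
    all_goals rw [hcard]; norm_num
end
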